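/- arXiv:math/0703429 — 3 statements merged into one kernel-verified Lean document; each statement's English description precedes it below -/
import Mathlib

section
/- Let X and Y be compact Hausdorff spaces and f : X → Y continuous. Then there is an infinite loose family for f if and only if there is an (ω+1)-loose function for f, where ω+1 denotes the one-point compactification of the countable discrete space ℕ (equivalently, a convergent sequence with its limit). -/
open Set Topology

universe u

section Defs

variable {X Y K Z : Type*}

/-- A subset `S` of a topological space is *scattered* iff every nonempty subset `T ⊆ S`
has a point which is isolated in the subspace topology of `T`. -/
def IsScatteredSet [TopologicalSpace X] (S : Set X) : Prop :=
  ∀ T ⊆ S, T.Nonempty → ∃ x ∈ T, ∃ U : Set X, IsOpen U ∧ U ∩ T = {x}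

/-- A *loose family* for `f : X → Y` : a pairwise disjoint family `Ps` of closed subsets of `X`
such that for some non-scattered `Q ⊆ Y`, `f '' P = Q` for all `P ∈ Ps`. -/
def LooseFamily [TopologicalSpace X] [TopologicalSpace Y] (f : X → Y)
    (Ps : Set (Set X)) : Prop :=
  Ps.Pairwise Disjoint ∧ (∀ P ∈ Ps, IsClosed P) ∧
    ∃ Q : Set Y, ¬ IsScatteredSet Q ∧ ∀ P ∈ Ps, f '' P = Q

/-- `f` is `κ`-*tight* iff there is no loose family for `f` of cardinality `κ`. -/
def IsTightCard [TopologicalSpace X] [TopologicalSpace Y] (κ : Cardinal) (f : X → Y) : Prop :=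
  ¬ ∃ Ps : Set (Set X), LooseFamily f Ps ∧ Cardinal.mk Ps = κ

/-- `f` is *tight* iff it is `2`-tight. -/
def IsTight [TopologicalSpace X] [TopologicalSpace Y] (f : X → Y) : Prop :=
  IsTightCard 2 f

/-- A `K`-*loose function* for `f : X → Y` : a continuous `φ : D → K` with `D` closed in `X`,
such that for some non-scattered `Q ⊆ Y`, `φ(f⁻¹{y} ∩ D) = K` for all `y ∈ Q`. -/
def LooseFunction [TopologicalSpace X] [TopologicalSpace Y] [TopologicalSpace K]
    (f : X → Y) (D : Set X) (φ : X → K) : Prop :=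
  IsClosed D ∧ ContinuousOn φ D ∧
    ∃ Q : Set Y, ¬ IsScatteredSet Q ∧ ∀ y ∈ Q, φ '' (f ⁻¹' {y} ∩ D) = Set.univ

/-- `f` is *weakly c-tight* iff there is no `K`-loose function for `f`
with `K` the Cantor space `2^ω`. -/
def WeaklyCTight [TopologicalSpace X] [TopologicalSpace Y] (f : X → Y) : Prop :=
  ¬ ∃ (D : Set X) (φ : X → (ℕ → Bool)), LooseFunction f D φ

/-- `f` is *finer* than `g` iff `f x₁ = f x₂` implies `g x₁ = g x₂`. -/
def Finer (f : X → Y) (g : X → Z) : Prop :=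
  ∀ x₁ x₂ : X, f x₁ = f x₂ → g x₁ = g x₂

end Defs

/-- `X` is `κ`-*dissipated* iff every continuous map from `X` to a compact metrizable
space is refined by a `κ`-tight continuous map from `X` to a compact metrizable space. -/
def IsDissipatedCard (κ : Cardinal.{u}) (X : Type u) [TopologicalSpace X] : Prop :=
  ∀ (Z : Type u) [TopologicalSpace Z] [CompactSpace Z] [TopologicalSpace.MetrizableSpace Z],
    ∀ g : X → Z, Continuous g →
      ∃ (Y : Type u) (tY : TopologicalSpace Y),
        @CompactSpace Y tY ∧ @TopologicalSpace.MetrizableSpace Y tY ∧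
        ∃ f : X → Y, @Continuous X Y _ tY f ∧ @IsTightCard X Y _ tY κ f ∧ Finer f g

/-- `X` is *weakly c-dissipated* iff every continuous map from `X` to a compact metrizable
space is refined by a weakly c-tight continuous map from `X` to a compact metrizable space. -/
def IsWeaklyCDissipated (X : Type u) [TopologicalSpace X] : Prop :=
  ∀ (Z : Type u) [TopologicalSpace Z] [CompactSpace Z] [TopologicalSpace.MetrizableSpace Z],
    ∀ g : X → Z, Continuous g →
      ∃ (Y : Type u) (tY : TopologicalSpace Y),
        @CompactSpace Y tY ∧ @TopologicalSpace.MetrizableSpace Y tY ∧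
        ∃ f : X → Y, @Continuous X Y _ tY f ∧ @WeaklyCTight X Y _ tY f ∧ Finer f g

/-!
The scattered subsets of a T₁ space are closed under finite unions, so the closed non-scattered
sets behave like positive sets for an ideal. Given infinitely many disjoint closed sets `P i` with
the same non-scattered image, one repeatedly sets aside a piece of some `P i` and keeps a closed
reservoir, disjoint from that piece, in which infinitely many of the `P j` still have large image.
Each such choice shrinks the target to a smaller closed non-scattered set, and decreasing sequences
of these may have scattered intersection; hence the construction runs along the binary tree,
splitting each target in two. A minimal closed set meeting all targets of the tree is non-scattered
and is covered by the targets of every level, so the pieces of level `n`, put together, form the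
fibre of the loose function over `n`, and compactness supplies the value `∞`.
Conversely, the fibres of a loose function over distinct points, restricted to the preimage of the
closure of `Q`, form a loose family.
-/

open Filter

section Scattered

variable {X : Type*} [TopologicalSpace X] {S T : Set X}

lemma IsScatteredSet.mono (hT : IsScatteredSet T) (h : S ⊆ T) : IsScatteredSet S :=
  fun R hR => hT R (hR.trans h)

lemma isScatteredSet_empty : IsScatteredSet (∅ : Set X) :=
  fun _ hT hne => absurd (hne.mono hT) not_nonempty_empty

lemma nonempty_of_not_isScatteredSet (hS : ¬ IsScatteredSet S) : S.Nonempty := by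
  rw [nonempty_iff_ne_empty]
  rintro rfl
  exact hS isScatteredSet_empty

lemma IsScatteredSet.union [T1Space X] (hS : IsScatteredSet S) (hT : IsScatteredSet T) :
    IsScatteredSet (S ∪ T) := by
  intro R hR hne
  rcases (R ∩ S).eq_empty_or_nonempty with hRS | hRS
  · exact hT R (fun x hx => (hR hx).resolve_left fun hxS => hRS.subset ⟨hx, hxS⟩) hne
  obtain ⟨x, ⟨hxR, -⟩, U, hU, hUx⟩ := hS _ inter_subset_right hRS
  have hUT : (U ∩ R) \ {x} ⊆ T := fun z hz =>
    (hR hz.1.2).resolve_left fun hzS => hz.2 (hUx.subset ⟨hz.1.1, hz.1.2, hzS⟩)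
  have hxU : x ∈ U := (hUx.superset rfl).1
  rcases ((U ∩ R) \ {x}).eq_empty_or_nonempty with hE | hE
  · exact ⟨x, hxR, U, hU, (sdiff_eq_empty.1 hE).antisymm (singleton_subset_iff.2 ⟨hxU, hxR⟩)⟩
  · obtain ⟨z, ⟨⟨-, hzR⟩, -⟩, V, hV, hVz⟩ := hT _ hUT hE
    refine ⟨z, hzR, (V ∩ U) \ {x}, (hV.inter hU).sdiff isClosed_singleton, ?_⟩
    rw [← hVz]
    ext
    simp only [mem_inter_iff, Set.mem_sdiff]
    tauto

lemma not_isScatteredSet_iff_exists_preperfect :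
    ¬ IsScatteredSet S ↔ ∃ T ⊆ S, T.Nonempty ∧ Preperfect T := by
  have isolated_iff (T : Set X) :
      (∃ x ∈ T, ∃ U, IsOpen U ∧ U ∩ T = {x}) ↔ ¬ Preperfect T := by
    simp only [preperfect_iff_nhds, not_forall, not_exists, not_and, not_not]
    constructor
    · rintro ⟨x, hx, U, hU, hUT⟩
      exact ⟨x, hx, U, hU.mem_nhds (hUT.superset rfl).1, fun y hy => hUT.subset hy⟩
    · rintro ⟨x, hx, N, hN, hNT⟩
      obtain ⟨U, hUN, hU, hxU⟩ := mem_nhds_iff.1 hN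
      exact ⟨x, hx, U, hU, eq_singleton_iff_unique_mem.2
        ⟨⟨hxU, hx⟩, fun y hy => hNT y ⟨hUN hy.1, hy.2⟩⟩⟩
  simp only [IsScatteredSet, isolated_iff, not_forall, not_not, exists_prop]

lemma not_isScatteredSet_of_preperfect (hT : Preperfect T) (hne : T.Nonempty) :
    ¬ IsScatteredSet T :=
  not_isScatteredSet_iff_exists_preperfect.2 ⟨T, Subset.rfl, hne, hT⟩

/-- Two points of a dense-in-itself kernel have neighbourhoods with disjoint closures. -/
lemma exists_disjoint_isClosed_not_isScatteredSet [T2Space X] (hcomp : IsCompact S)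
    (hS : ¬ IsScatteredSet S) :
    ∃ A B, A ⊆ S ∧ B ⊆ S ∧ IsClosed A ∧ IsClosed B ∧ ¬ IsScatteredSet A ∧ ¬ IsScatteredSet B ∧
      Disjoint A B := by
  obtain ⟨K, hKS, ⟨x, hx⟩, hK⟩ := not_isScatteredSet_iff_exists_preperfect.1 hS
  obtain ⟨y, ⟨-, hy⟩, hyx⟩ := preperfect_iff_nhds.1 hK x hx univ univ_mem
  have hclosure (U : Set X) : closure (U ∩ K) ⊆ S :=
    closure_minimal (inter_subset_right.trans hKS) hcomp.isClosed
  have hnot {U : Set X} (hU : IsOpen U) {z : X} (hzU : z ∈ U) (hz : z ∈ K) :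
      ¬ IsScatteredSet (closure (U ∩ K)) := fun h =>
    not_isScatteredSet_of_preperfect (hK.open_inter hU) ⟨z, hzU, hz⟩ (h.mono subset_closure)
  obtain ⟨U, V, hU, hV, hxU, hyV, hUV⟩ := t2_separation hyx.symm
  have hyU : y ∉ closure (U ∩ K) := fun h =>
    (hUV.closure_left hV).le_bot ⟨closure_mono inter_subset_left h, hyV⟩
  obtain ⟨W, W', hW, hW', hUW, hyW', hWW'⟩ := SeparatedNhds.of_isCompact_isCompact
    (hcomp.of_isClosed_subset isClosed_closure (hclosure U)) isCompact_singleton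
    (disjoint_singleton_right.2 hyU)
  exact ⟨closure (U ∩ K), closure (W' ∩ K), hclosure U, hclosure W', isClosed_closure,
    isClosed_closure, hnot hU hxU hx, hnot hW' (hyW' rfl) hy,
    (hWW'.closure_right hW).mono hUW (closure_mono inter_subset_left)⟩

end Scattered

section MinimalTransversal

variable {X ι : Type*} [TopologicalSpace X] {F : ι → Set X} {T : Set X}

/-- A closed transversal of `F`: a closed set which meets every member of the family. -/
def IsClosedTransversal (F : ι → Set X) (T : Set X) : Prop :=
  IsClosed T ∧ ∀ i, (T ∩ F i).Nonempty

lemma exists_minimal_isClosedTransversal [T2Space X] (hF : ∀ i, IsCompact (F i))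
    (hne : ∀ i, (F i).Nonempty) : ∃ T, Minimal (IsClosedTransversal F) T := by
  suffices hbound : ∀ c ⊆ {T | IsClosedTransversal F T}, IsChain (· ⊆ ·) c → c.Nonempty →
      IsClosedTransversal F (⋂₀ c) by
    obtain ⟨T, -, hT⟩ := zorn_superset_nonempty {T | IsClosedTransversal F T}
      (fun c hc hchain hcne => ⟨⋂₀ c, hbound c hc hchain hcne, fun _ => sInter_subset_of_mem⟩)
      univ ⟨isClosed_univ, by simpa only [univ_inter] using hne⟩
    exact ⟨T, hT⟩
  intro c hc hchain hcne
  have : Nonempty c := hcne.to_subtype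
  refine ⟨isClosed_sInter fun t ht => (hc ht).1, fun i => ?_⟩
  have hcompact (t : c) : IsCompact (t.1 ∩ F i) := (hF i).inter_left (hc t.2).1
  rw [sInter_eq_iInter, iInter_inter]
  refine IsCompact.nonempty_iInter_of_directed_nonempty_isCompact_isClosed _ ?_
    (fun t => (hc t.2).2 i) hcompact fun t => (hcompact t).isClosed
  intro s t
  rcases hchain.total s.2 t.2 with h | h
  · exact ⟨s, Subset.rfl, inter_subset_inter_left _ h⟩
  · exact ⟨t, inter_subset_inter_left _ h, Subset.rfl⟩

lemma subset_of_minimal_isClosedTransversal (hT : Minimal (IsClosedTransversal F) T) {L : Set X}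
    (hL : IsClosed L) (hFL : ∀ i, ∃ j, F j ⊆ F i ∩ L) : T ⊆ L := by
  have hTL : IsClosedTransversal F (T ∩ L) := by
    refine ⟨hT.prop.1.inter hL, fun i => ?_⟩
    obtain ⟨j, hj⟩ := hFL i
    obtain ⟨x, hxT, hx⟩ := hT.prop.2 j
    exact ⟨x, ⟨hxT, (hj hx).2⟩, (hj hx).1⟩
  exact (hT.le_of_le hTL inter_subset_left).trans inter_subset_right

/-- Deleting an isolated point `x` from `T` would keep a transversal unless `T ∩ F i = {x}` for
some `i`, and then two disjoint members inside `F i` would both contain `x`. -/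
lemma not_isScatteredSet_of_minimal_isClosedTransversal [Nonempty ι]
    (hT : Minimal (IsClosedTransversal F) T)
    (hF : ∀ i, ∃ j k, F j ⊆ F i ∧ F k ⊆ F i ∧ Disjoint (F j) (F k)) : ¬ IsScatteredSet T := by
  intro hscat
  obtain ⟨x, hx, U, hU, hUT⟩ :=
    hscat T Subset.rfl ((hT.prop.2 (Classical.arbitrary ι)).mono inter_subset_left)
  obtain ⟨i, hi⟩ : ∃ i, T ∩ F i ⊆ U := by
    by_contra! h
    have hdiff : IsClosedTransversal F (T \ U) := ⟨hT.prop.1.sdiff hU, fun i =>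
      let ⟨y, hy, hyU⟩ := not_subset.1 (h i); ⟨y, ⟨hy.1, hyU⟩, hy.2⟩⟩
    exact (hT.le_of_le hdiff sdiff_subset hx).2 (hUT.superset rfl).1
  have mem_of_subset (j : ι) (hj : F j ⊆ F i) : x ∈ F j := by
    obtain ⟨y, hyT, hy⟩ := hT.prop.2 j
    obtain rfl : y = x := hUT.subset ⟨hi ⟨hyT, hj hy⟩, hyT⟩
    exact hy
  obtain ⟨j, k, hj, hk, hjk⟩ := hF i
  exact hjk.le_bot ⟨mem_of_subset j hj, mem_of_subset k hk⟩

end MinimalTransversal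

section Scheme

variable {X β : Type*} {A B G : List β → Set X} {n : ℕ}

/-- The `n`-th level of a scheme: the union of the sets indexed by lists of length `n`. -/
def schemeLevel (A : List β → Set X) (n : ℕ) : Set X :=
  ⋃ l ∈ {l : List β | l.length = n}, A l

lemma mem_schemeLevel {x : X} : x ∈ schemeLevel A n ↔ ∃ l : List β, l.length = n ∧ x ∈ A l := by
  simp only [schemeLevel, mem_ofPred_eq, mem_iUnion, exists_prop]

lemma isClosed_schemeLevel [TopologicalSpace X] [Finite β] (hA : ∀ l, IsClosed (A l)) (n : ℕ) :
    IsClosed (schemeLevel A n) :=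
  (List.finite_length_eq β n).isClosed_biUnion fun l _ => hA l

lemma schemeLevel_succ_subset (h : ∀ l a, A (a :: l) ⊆ B l) (n : ℕ) :
    schemeLevel A (n + 1) ⊆ schemeLevel B n := by
  intro x hx
  obtain ⟨_ | ⟨a, l⟩, hl, hx⟩ := mem_schemeLevel.1 hx
  · cases hl
  · exact mem_schemeLevel.2 ⟨l, Nat.succ.inj hl, h l a hx⟩

lemma subset_of_isSuffix (hA : CantorScheme.Antitone A) {l m : List β} (h : l <:+ m) :
    A m ⊆ A l := by
  obtain ⟨k, rfl⟩ := h
  induction k with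
  | nil => exact Subset.rfl
  | cons a k ih => exact (hA _ a).trans ih

lemma subset_schemeLevel (hA : CantorScheme.Antitone A) {l : List β} (h : n ≤ l.length) :
    A l ⊆ schemeLevel A n := fun _ hx =>
  mem_schemeLevel.2 ⟨l.drop (l.length - n), by rw [List.length_drop, Nat.sub_sub_self h],
    subset_of_isSuffix hA (List.drop_suffix _ _) hx⟩

lemma eq_of_mem_of_length_eq (hanti : CantorScheme.Antitone A) (hdisj : CantorScheme.Disjoint A)
    {x : X} {l m : List β} (hlen : l.length = m.length) (hl : x ∈ A l) (hm : x ∈ A m) :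
    l = m := by
  induction l generalizing m with
  | nil => exact (List.length_eq_zero_iff.1 hlen.symm).symm
  | cons a l ih =>
    obtain _ | ⟨b, m⟩ := m
    · cases hlen
    obtain rfl := ih (Nat.succ.inj hlen) (hanti _ _ hl) (hanti _ _ hm)
    by_contra hab
    exact (hdisj l fun h : a = b => hab (h ▸ rfl)).le_bot ⟨hl, hm⟩

lemma disjoint_schemeLevel_inter (hanti : CantorScheme.Antitone G)
    (hdisj : CantorScheme.Disjoint G) (hAB : ∀ l, Disjoint (A l) (B l)) (n : ℕ) :
    Disjoint (schemeLevel (fun l => A l ∩ G l) n) (schemeLevel (fun l => B l ∩ G l) n) := by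
  refine disjoint_left.2 fun x hxA hxB => ?_
  obtain ⟨l, hl, hxl, hGl⟩ := mem_schemeLevel.1 hxA
  obtain ⟨m, hm, hxm, hGm⟩ := mem_schemeLevel.1 hxB
  obtain rfl := eq_of_mem_of_length_eq hanti hdisj (hl.trans hm.symm) hGl hGm
  exact (hAB l).le_bot ⟨hxl, hxm⟩

lemma exists_not_isScatteredSet_subset_schemeLevel [TopologicalSpace X] [T2Space X] [Finite β]
    [Nontrivial β] (hcomp : ∀ l, IsCompact (A l)) (hne : ∀ l, (A l).Nonempty)
    (hanti : CantorScheme.Antitone A) (hdisj : CantorScheme.Disjoint A) :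
    ∃ T, ¬ IsScatteredSet T ∧ ∀ n, T ⊆ schemeLevel A n := by
  obtain ⟨a, b, hab⟩ := exists_pair_ne β
  obtain ⟨T, hT⟩ := exists_minimal_isClosedTransversal hcomp hne
  refine ⟨T, not_isScatteredSet_of_minimal_isClosedTransversal hT fun l =>
    ⟨a :: l, b :: l, hanti l a, hanti l b, hdisj l hab⟩, fun n => ?_⟩
  refine subset_of_minimal_isClosedTransversal hT
    (isClosed_schemeLevel (fun l => (hcomp l).isClosed) n) fun l =>
      ⟨List.replicate n a ++ l, subset_inter ?_ ?_⟩
  · exact subset_of_isSuffix hanti (List.suffix_append _ _)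
  · exact subset_schemeLevel hanti (by simp)

end Scheme

section LooseFunction

variable {X Y ι : Type*}

lemma continuous_onePoint_of_isClopen_preimage [TopologicalSpace X] [TopologicalSpace ι]
    [DiscreteTopology ι] {φ : X → OnePoint ι}
    (h : ∀ i : ι, IsClopen (φ ⁻¹' {(i : OnePoint ι)})) : Continuous φ := by
  have preimage_eq {U : Set (OnePoint ι)} (hU : OnePoint.infty ∉ U) :
      φ ⁻¹' U = ⋃ i ∈ ((↑) ⁻¹' U : Set ι), φ ⁻¹' {(i : OnePoint ι)} := by
    ext x
    simp only [mem_preimage, mem_iUnion, mem_singleton_iff, exists_prop]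
    refine ⟨fun hx => ?_, fun ⟨_, hi, hx⟩ => hx ▸ hi⟩
    obtain ⟨i, hi⟩ := OnePoint.ne_infty_iff_exists.1 (ne_of_mem_of_not_mem hx hU)
    exact ⟨i, hi ▸ hx, hi.symm⟩
  refine continuous_def.2 fun U hU => ?_
  by_cases hinfty : OnePoint.infty ∈ U
  · have hfin : ((↑) ⁻¹' Uᶜ : Set ι).Finite :=
      ((OnePoint.isOpen_iff_of_mem hinfty).1 hU).2.finite_of_discrete
    rw [← isClosed_compl_iff, ← preimage_compl, preimage_eq (notMem_compl_iff.2 hinfty)]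
    exact hfin.isClosed_biUnion fun i _ => (h i).isClosed
  · rw [preimage_eq hinfty]
    exact isOpen_biUnion fun i _ => (h i).isOpen

lemma exists_preimage_coe_eq_of_pairwise_disjoint {S : ι → Set X}
    (hS : Pairwise fun i j => Disjoint (S i) (S j)) :
    ∃ φ : X → OnePoint ι, ∀ i : ι, φ ⁻¹' {(i : OnePoint ι)} = S i := by
  classical
  refine ⟨fun x => if h : ∃ i, x ∈ S i then (h.choose : OnePoint ι) else OnePoint.infty,
    fun i => ext fun x => ?_⟩
  rw [mem_preimage, mem_singleton_iff]
  split_ifs with h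
  · rw [OnePoint.coe_eq_coe]
    refine ⟨fun hi => hi ▸ h.choose_spec, fun hi => ?_⟩
    by_contra hne
    exact (hS hne).le_bot ⟨h.choose_spec, hi⟩
  · exact iff_of_false (OnePoint.infty_ne_coe i) fun hi => h ⟨i, hi⟩

lemma disjoint_closure_iUnion_ne [TopologicalSpace X] {S E : ℕ → Set X}
    (hS : ∀ n, IsClosed (S n)) (hE : ∀ n, IsClosed (E n)) (hSE : ∀ n, S (n + 1) ⊆ E n)
    (hanti : Antitone E) (hdisj : ∀ n, Disjoint (S n) (E n)) (n : ℕ) :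
    Disjoint (S n) (closure (⋃ m ≠ n, S m)) := by
  have hlt {m k : ℕ} (hmk : m < k) : S k ⊆ E m := by
    obtain ⟨k, rfl⟩ := Nat.exists_eq_add_one_of_ne_zero (Nat.ne_zero_of_lt hmk)
    exact (hSE k).trans (hanti (Nat.le_of_lt_succ hmk))
  have hclosure : closure (⋃ m ≠ n, S m) ⊆ (⋃ m ∈ Iio n, S m) ∪ E n := by
    refine closure_minimal (iUnion₂_subset fun m hm => ?_)
      (((finite_Iio n).isClosed_biUnion fun m _ => hS m).union (hE n))
    rcases hm.lt_or_gt with h | h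
    · exact (subset_biUnion_of_mem (u := S) (mem_Iio.2 h)).trans subset_union_left
    · exact (hlt h).trans subset_union_right
  refine Disjoint.mono_right hclosure (disjoint_union_right.2 ⟨?_, hdisj n⟩)
  exact disjoint_iUnion₂_right.2 fun m hm => ((hdisj m).mono_right (hlt hm)).symm

variable [TopologicalSpace X] [TopologicalSpace Y] [CompactSpace X] {f : X → Y}

lemma exists_looseFunction_of_disjoint_closure [T1Space Y] [TopologicalSpace ι]
    [DiscreteTopology ι] [NoncompactSpace ι] (hf : Continuous f) {S : ι → Set X}
    (hclosed : ∀ i, IsClosed (S i)) (hdisj : ∀ i, Disjoint (S i) (closure (⋃ j ≠ i, S j)))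
    {T : Set Y} (hT : ¬ IsScatteredSet T) (hTS : ∀ i, T ⊆ f '' S i) :
    ∃ (D : Set X) (φ : X → OnePoint ι), LooseFunction f D φ := by
  have hsub {i j : ι} (hji : j ≠ i) : S j ⊆ closure (⋃ j ≠ i, S j) :=
    (subset_iUnion₂ (s := fun j (_ : j ≠ i) => S j) j hji).trans subset_closure
  obtain ⟨φ, hφ⟩ := exists_preimage_coe_eq_of_pairwise_disjoint fun i j hij =>
    (hdisj i).mono_right (hsub hij.symm)
  set D := closure (⋃ i, S i)
  have hD (i : ι) : D ⊆ S i ∪ closure (⋃ j ≠ i, S j) := by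
    refine closure_minimal (iUnion_subset fun j => ?_) ((hclosed i).union isClosed_closure)
    obtain rfl | hji := eq_or_ne j i
    · exact subset_union_left
    · exact (hsub hji).trans subset_union_right
  have hcont : ContinuousOn φ D := by
    rw [continuousOn_iff_continuous_domRestrict]
    refine continuous_onePoint_of_isClopen_preimage fun i => ?_
    have hrestrict : D.domRestrict φ ⁻¹' {(i : OnePoint ι)} = (↑) ⁻¹' S i := by
      rw [← hφ i]; rfl
    have hcompl : ((↑) ⁻¹' S i : Set D)ᶜ = (↑) ⁻¹' closure (⋃ j ≠ i, S j) :=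
      ext fun x => ⟨(hD i x.2).resolve_left, fun hx hxS => (hdisj i).le_bot ⟨hxS, hx⟩⟩
    rw [hrestrict]
    refine ⟨(hclosed i).preimage continuous_subtype_val, isClosed_compl_iff.1 ?_⟩
    rw [hcompl]
    exact isClosed_closure.preimage continuous_subtype_val
  refine ⟨D, φ, isClosed_closure, hcont, T, hT, fun y hy => ?_⟩
  have himage : IsClosed (φ '' (f ⁻¹' {y} ∩ D)) :=
    (((isClosed_singleton.preimage hf).inter isClosed_closure).isCompact.image_of_continuousOn
      (hcont.mono inter_subset_right)).isClosed
  have hrange : range ((↑) : ι → OnePoint ι) ⊆ φ '' (f ⁻¹' {y} ∩ D) := by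
    rintro _ ⟨i, rfl⟩
    obtain ⟨x, hx, rfl⟩ := hTS i hy
    exact ⟨x, ⟨rfl, subset_closure (mem_iUnion_of_mem i hx)⟩, (hφ i).superset hx⟩
  exact himage.closure_eq ▸ (OnePoint.denseRange_coe.mono hrange).closure_eq

lemma LooseFunction.exists_infinite_looseFamily [T2Space Y] {K : Type*} [TopologicalSpace K]
    [T1Space K] [Infinite K] (hf : Continuous f) {D : Set X} {φ : X → K}
    (h : LooseFunction f D φ) : ∃ Ps : Set (Set X), LooseFamily f Ps ∧ Ps.Infinite := by
  obtain ⟨hD, hφ, Q, hQ, hsurj⟩ := h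
  let P (k : K) : Set X := (D ∩ φ ⁻¹' {k}) ∩ f ⁻¹' closure Q
  have hfiber (k : K) : IsClosed (D ∩ φ ⁻¹' {k}) :=
    hφ.preimage_isClosed_of_isClosed hD isClosed_singleton
  have himage (k : K) : f '' P k = closure Q := by
    have hQk : Q ⊆ f '' (D ∩ φ ⁻¹' {k}) := fun y hy =>
      let ⟨x, ⟨hxy, hxD⟩, hxk⟩ := (hsurj y hy).superset (mem_univ k); ⟨x, ⟨hxD, hxk⟩, hxy⟩
    rw [image_inter_preimage, inter_eq_right]
    exact closure_minimal hQk ((hfiber k).isCompact.image hf).isClosed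
  have hdisj : Pairwise fun i j => Disjoint (P i) (P j) := fun i j hij =>
    disjoint_left.2 fun x hi hj => hij (hi.1.2.symm.trans hj.1.2)
  have hinj : Function.Injective P := by
    intro i j hij
    by_contra hne
    have hempty : P i = ∅ := disjoint_self.1 ((hdisj hne).mono_right hij.le)
    refine (nonempty_of_not_isScatteredSet hQ).closure.ne_empty ?_
    rw [← himage i, hempty, image_empty]
  refine ⟨range P, ⟨hdisj.range_pairwise, ?_, closure Q, fun h => hQ (h.mono subset_closure), ?_⟩,
    infinite_range_of_injective hinj⟩
  · rintro _ ⟨k, rfl⟩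
    exact (hfiber k).inter (isClosed_closure.preimage hf)
  · rintro _ ⟨k, rfl⟩
    exact himage k

end LooseFunction

section Reservoir

variable {X Y ι : Type*} [TopologicalSpace Y] {f : X → Y} {P : ι → Set X} {C C₀ C₁ : Set X}
  {F G : Set Y}

/-- `C` is a reservoir over `F` for the family `P`: over every closed non-scattered part of `F`,
infinitely many of the sets `P i ∩ C` still have a non-scattered image. -/
def IsReservoir (f : X → Y) (P : ι → Set X) (C : Set X) (F : Set Y) : Prop :=
  ∀ G ⊆ F, IsClosed G → ¬ IsScatteredSet G →
    ∃ᶠ i in cofinite, ¬ IsScatteredSet (G ∩ f '' (P i ∩ C))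

lemma IsReservoir.mono (h : IsReservoir f P C F) (hGF : G ⊆ F) : IsReservoir f P C G :=
  fun H hH => h H (hH.trans hGF)

lemma isReservoir_univ [Infinite ι] (h : ∀ i, F ⊆ f '' P i) : IsReservoir f P univ F := by
  intro G hG _ hns
  refine Frequently.of_forall fun i => ?_
  rwa [inter_univ, inter_eq_left.2 (hG.trans (h i))]

lemma IsReservoir.exists_of_subset_union [T1Space Y] (h : IsReservoir f P C F) (hF : IsClosed F)
    (hns : ¬ IsScatteredSet F) (hC : C ⊆ C₀ ∪ C₁) :
    ∃ G ⊆ F, IsClosed G ∧ ¬ IsScatteredSet G ∧ (IsReservoir f P C₀ G ∨ IsReservoir f P C₁ G) := by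
  by_cases h₀ : IsReservoir f P C₀ F
  · exact ⟨F, Subset.rfl, hF, hns, .inl h₀⟩
  simp only [IsReservoir, not_forall, not_frequently, not_not] at h₀
  obtain ⟨G, hGF, hG, hGns, hscat⟩ := h₀
  refine ⟨G, hGF, hG, hGns, .inr fun H hHG hH hHns => ?_⟩
  refine ((h H (hHG.trans hGF) hH hHns).and_eventually hscat).mono ?_
  rintro i ⟨hi, hi₀⟩ hi₁
  refine hi (((hi₀.mono (inter_subset_inter_left _ hHG)).union hi₁).mono ?_)
  rw [← inter_union_distrib_left, ← image_union, ← inter_union_distrib_left]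
  gcongr

end Reservoir

section FusionTree

variable {X Y ι : Type*} [TopologicalSpace X] [TopologicalSpace Y]

/-- A node of the fusion tree: over the closed non-scattered set `target`, a closed `piece` has been
set aside, and the closed set `reservoir`, disjoint from it, is left for the nodes below. -/
structure FusionNode (f : X → Y) (P : ι → Set X) where
  target : Set Y
  piece : Set X
  reservoir : Set X
  isClosed_target : IsClosed target
  not_isScatteredSet_target : ¬ IsScatteredSet target
  isClosed_piece : IsClosed piece
  isClosed_reservoir : IsClosed reservoir
  disjoint : Disjoint piece reservoir
  target_subset : target ⊆ f '' piece
  isReservoir : IsReservoir f P reservoir target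

variable {f : X → Y} {P : ι → Set X}

lemma FusionNode.isCompact_target [CompactSpace X] (hf : Continuous f) (N : FusionNode f P) :
    IsCompact N.target :=
  (N.isClosed_piece.isCompact.image hf).of_isClosed_subset N.isClosed_target N.target_subset

variable [CompactSpace X] [NormalSpace X] [T2Space Y]

/-- Two members `P i`, `P j` which are large over `F` have disjoint open neighbourhoods `A` and `B`,
so `C \ A` and `C \ B` cover `C` and one of them remains a reservoir; it misses `P i` or `P j`. -/
lemma IsReservoir.exists_fusionNode (hf : Continuous f) (hclosed : ∀ i, IsClosed (P i))
    (hdisj : Pairwise fun i j => Disjoint (P i) (P j)) {C : Set X} {F : Set Y}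
    (h : IsReservoir f P C F) (hC : IsClosed C) (hF : IsClosed F) (hns : ¬ IsScatteredSet F) :
    ∃ N : FusionNode f P, N.target ⊆ F ∧ N.piece ⊆ C ∧ N.reservoir ⊆ C := by
  have hpiece (i : ι) : IsClosed (P i ∩ C) := (hclosed i).inter hC
  have himage (i : ι) : IsClosed (f '' (P i ∩ C)) := ((hpiece i).isCompact.image hf).isClosed
  obtain ⟨i, hi⟩ := (h F Subset.rfl hF hns).exists
  obtain ⟨j, hj, hji⟩ := ((h _ inter_subset_left (hF.inter (himage i)) hi).and_eventually
    (eventually_cofinite_ne i)).exists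
  obtain ⟨A, B, hA, hB, hPA, hPB, hAB⟩ :=
    normal_separation (hclosed i) (hclosed j) (hdisj hji.symm)
  have hcover : C ⊆ C \ A ∪ C \ B := by
    rw [← sdiff_inter, hAB.inter_eq, sdiff_empty]
  obtain ⟨G, hG, hGclosed, hGns, hres⟩ :=
    (h.mono (inter_subset_left.trans inter_subset_left)).exists_of_subset_union
      ((hF.inter (himage i)).inter (himage j)) hj hcover
  have node_of (k : ι) (U : Set X) (hU : IsOpen U) (hPU : P k ⊆ U) (hGk : G ⊆ f '' (P k ∩ C))
      (hr : IsReservoir f P (C \ U) G) :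
      ∃ N : FusionNode f P, N.target ⊆ F ∧ N.piece ⊆ C ∧ N.reservoir ⊆ C :=
    ⟨⟨G, P k ∩ C, C \ U, hGclosed, hGns, hpiece k, hC.sdiff hU,
      disjoint_sdiff_right.mono_left (inter_subset_left.trans hPU), hGk, hr⟩,
      hG.trans (inter_subset_left.trans inter_subset_left), inter_subset_right, sdiff_subset⟩
  rcases hres with hr | hr
  · exact node_of i A hA hPA (hG.trans (inter_subset_left.trans inter_subset_right)) hr
  · exact node_of j B hB hPB (hG.trans inter_subset_right) hr

lemma FusionNode.exists_children (hf : Continuous f) (hclosed : ∀ i, IsClosed (P i))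
    (hdisj : Pairwise fun i j => Disjoint (P i) (P j)) (N : FusionNode f P) :
    ∃ child : Bool → FusionNode f P,
      (∀ b, (child b).target ⊆ N.target ∧ (child b).piece ⊆ N.reservoir ∧
        (child b).reservoir ⊆ N.reservoir) ∧
      Pairwise fun a b => Disjoint (child a).target (child b).target := by
  obtain ⟨F₀, F₁, h₀, h₁, hF₀, hF₁, hns₀, hns₁, hF⟩ :=
    exists_disjoint_isClosed_not_isScatteredSet (N.isCompact_target hf) N.not_isScatteredSet_target
  obtain ⟨M₀, ht₀, hM₀⟩ := (N.isReservoir.mono h₀).exists_fusionNode hf hclosed hdisj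
    N.isClosed_reservoir hF₀ hns₀
  obtain ⟨M₁, ht₁, hM₁⟩ := (N.isReservoir.mono h₁).exists_fusionNode hf hclosed hdisj
    N.isClosed_reservoir hF₁ hns₁
  have hM : Disjoint M₀.target M₁.target := hF.mono ht₀ ht₁
  refine ⟨fun b => cond b M₁ M₀, ?_, ?_⟩
  · rintro (_ | _)
    exacts [⟨ht₀.trans h₀, hM₀⟩, ⟨ht₁.trans h₁, hM₁⟩]
  · rintro (_ | _) (_ | _) hab
    exacts [absurd rfl hab, hM, hM.symm, absurd rfl hab]

lemma exists_fusionTree (hf : Continuous f) (hclosed : ∀ i, IsClosed (P i))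
    (hdisj : Pairwise fun i j => Disjoint (P i) (P j)) (root : FusionNode f P) :
    ∃ N : List Bool → FusionNode f P,
      CantorScheme.Antitone (fun l => (N l).target) ∧
      CantorScheme.Disjoint (fun l => (N l).target) ∧
      (∀ l b, (N (b :: l)).piece ⊆ (N l).reservoir) ∧
      ∀ l b, (N (b :: l)).reservoir ⊆ (N l).reservoir := by
  choose child hchild hchild_disj using FusionNode.exists_children hf hclosed hdisj
  let N (l : List Bool) : FusionNode f P := l.foldr (fun b M => child M b) root
  exact ⟨N, fun l b => (hchild (N l) b).1, fun l => hchild_disj (N l),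
    fun l b => (hchild (N l) b).2.1, fun l b => (hchild (N l) b).2.2⟩

end FusionTree

section FusionLimit

variable {X Y : Type*} [TopologicalSpace X] [CompactSpace X] [NormalSpace X]
  [TopologicalSpace Y] [T2Space Y] {f : X → Y}

lemma FusionNode.exists_looseFunction {ι : Type*} {P : ι → Set X} (hf : Continuous f)
    (hclosed : ∀ i, IsClosed (P i)) (hdisj : Pairwise fun i j => Disjoint (P i) (P j))
    (root : FusionNode f P) : ∃ (D : Set X) (φ : X → OnePoint ℕ), LooseFunction f D φ := by
  obtain ⟨N, hanti, htarget, hpiece, hres⟩ := exists_fusionTree hf hclosed hdisj root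
  obtain ⟨T, hT, hTN⟩ := exists_not_isScatteredSet_subset_schemeLevel
    (fun l => (N l).isCompact_target hf)
    (fun l => nonempty_of_not_isScatteredSet (N l).not_isScatteredSet_target) hanti htarget
  let G (l : List Bool) : Set X := f ⁻¹' (N l).target
  have hG (l : List Bool) : IsClosed (G l) := (N l).isClosed_target.preimage hf
  have hGanti : CantorScheme.Antitone G := fun l b => preimage_mono (hanti l b)
  have hGdisj : CantorScheme.Disjoint G := fun l _ _ hab => (htarget l hab).preimage f
  let S := schemeLevel fun l => (N l).piece ∩ G l
  let E := schemeLevel fun l => (N l).reservoir ∩ G l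
  have hS : ∀ n, IsClosed (S n) :=
    isClosed_schemeLevel fun l => (N l).isClosed_piece.inter (hG l)
  have hE : ∀ n, IsClosed (E n) :=
    isClosed_schemeLevel fun l => (N l).isClosed_reservoir.inter (hG l)
  have hSE : ∀ n, S (n + 1) ⊆ E n :=
    schemeLevel_succ_subset fun l b => inter_subset_inter (hpiece l b) (hGanti l b)
  have hEanti : Antitone E := antitone_nat_of_succ_le
    (schemeLevel_succ_subset fun l b => inter_subset_inter (hres l b) (hGanti l b))
  have hSEdisj : ∀ n, Disjoint (S n) (E n) :=
    disjoint_schemeLevel_inter hGanti hGdisj fun l => (N l).disjoint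
  refine exists_looseFunction_of_disjoint_closure hf hS
    (disjoint_closure_iUnion_ne hS hE hSE hEanti hSEdisj) hT fun n y hy => ?_
  obtain ⟨l, hl, hyl⟩ := mem_schemeLevel.1 (hTN n hy)
  obtain ⟨x, hx, rfl⟩ := (N l).target_subset hyl
  exact ⟨x, mem_schemeLevel.2 ⟨l, hl, hx, hyl⟩, rfl⟩

lemma LooseFamily.exists_looseFunction (hf : Continuous f) {Ps : Set (Set X)}
    (h : LooseFamily f Ps) (hinf : Ps.Infinite) :
    ∃ (D : Set X) (φ : X → OnePoint ℕ), LooseFunction f D φ := by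
  obtain ⟨hdisj, hclosed, Q, hQ, himage⟩ := h
  have : Infinite Ps := hinf.to_subtype
  have hPclosed (P : Ps) : IsClosed P.1 := hclosed P P.2
  have hPdisj : Pairwise fun P P' : Ps => Disjoint P.1 P'.1 := fun P P' hPP' =>
    hdisj P.2 P'.2 fun h => hPP' (Subtype.ext h)
  have hQclosed : IsClosed Q := by
    obtain ⟨P, hP⟩ := hinf.nonempty
    exact himage P hP ▸ ((hclosed P hP).isCompact.image hf).isClosed
  have hres : IsReservoir f (Subtype.val : Ps → Set X) univ Q :=
    isReservoir_univ fun P => (himage P P.2).superset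
  obtain ⟨root, -⟩ := hres.exists_fusionNode hf hPclosed hPdisj isClosed_univ hQclosed hQ
  exact root.exists_looseFunction hf hPclosed hPdisj

end FusionLimit

theorem stmt1_general {X Y : Type*}
    [TopologicalSpace X] [CompactSpace X] [NormalSpace X]
    [TopologicalSpace Y] [T2Space Y]
    (f : X → Y) (hf : Continuous f) :
    (∃ Ps : Set (Set X), LooseFamily f Ps ∧ Ps.Infinite) ↔
      ∃ (D : Set X) (φ : X → OnePoint ℕ), LooseFunction f D φ :=
  ⟨fun ⟨_, h, hinf⟩ => h.exists_looseFunction hf hinf,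
    fun ⟨_, _, h⟩ => h.exists_infinite_looseFamily hf⟩

/-- There is an infinite loose family for `f` iff there is an `(ω+1)`-loose function for `f`,
where `ω+1` is the one-point compactification of the countable discrete space `ℕ`. -/
theorem stmt1 {X Y : Type*}
    [TopologicalSpace X] [CompactSpace X] [T2Space X]
    [TopologicalSpace Y] [CompactSpace Y] [T2Space Y]
    (f : X → Y) (hf : Continuous f) :
    (∃ Ps : Set (Set X), LooseFamily f Ps ∧ Ps.Infinite) ↔
      (∃ (D : Set X) (φ : X → OnePoint ℕ), LooseFunction f D φ) :=
  stmt1_general f hf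
end

section
/- Let n be finite and let X_i, for i ≤ n, be a compact separable LOTS. Then ∏_{i≤n} X_i is (2^n + 1)-dissipated. Furthermore, if all the X_i are not scattered and at most one of the X_i is second countable, then ∏_{i≤n} X_i is not 2^n-dissipated. -/
open Set Topology

universe u

/-!
By Lindelöf, a continuous map `g` from a product of compact linearly ordered spaces to a metrizable
space factors through countably many monotone functions of one coordinate, hence through a product
of monotone maps `F i : X i → [0, 1]`, one for each coordinate. Separability allows refining each
`F i` so that it is at most two-to-one.

Let `P` range over a loose family for such a product map, with common image `Q`. Since `Q` is not
scattered, it has an accumulation point `q`, and `Q` approaches `q` strictly from one side in some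
coordinate `i`. Lifting this approach to `P` by compactness gives a point of `P` over `q` whose
`i`-th coordinate is the extreme point of its fibre on that side. At most `2 ^ n` points of the
fibre over `q` have this property, so a loose family has at most `2 ^ n` members.

Conversely, a separable linearly ordered space which is not second countable has uncountably many
jumps `a ⋖ b`, of which a monotone map to `[0, 1]` separates only countably many. Given `f`,
choosing in all coordinates but `i₀` a jump that `f` does not see produces `2 ^ n` disjoint
parallel copies of `X i₀` on which `f` agrees.
-/

open Filter TopologicalSpace unitInterval

theorem exists_countable_finer {X Z : Type*} [TopologicalSpace X] [CompactSpace X]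
    [TopologicalSpace Z] [MetrizableSpace Z] {κ : Type*} {E : κ → Type*}
    [∀ k, TopologicalSpace (E k)] [∀ k, T2Space (E k)] {h : ∀ k, X → E k}
    (hh : ∀ k, Continuous (h k)) {g : X → Z} (hg : Continuous g)
    (hhg : Finer (fun x k => h k x) g) :
    ∃ J : Set κ, J.Countable ∧ Finer (fun x (k : J) => h k x) g := by
  let _ := metrizableSpaceMetric Z
  obtain ⟨K, hK, -, hKU, -⟩ := (isClosed_diagonal (X := Z)).isOpen_compl.exists_iUnion_isClosed
  have hgg : Continuous (Prod.map g g) := hg.prodMap hg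
  have hLindelof : IsLindelof (Prod.map g g ⁻¹' (diagonal Z)ᶜ) := by
    rw [← hKU, preimage_iUnion]
    exact isLindelof_iUnion fun n => ((hK n).preimage hgg).isCompact.isLindelof
  obtain ⟨J, hJ, hcover⟩ := hLindelof.elim_countable_subcover
    (fun k => {p : X × X | h k p.1 ≠ h k p.2})
    (fun k => isOpen_ne_fun ((hh k).comp continuous_fst) ((hh k).comp continuous_snd))
    fun p hp => mem_iUnion.2 (Function.ne_iff.1 (mt (hhg p.1 p.2) hp))
  refine ⟨J, hJ, fun x y hxy => ?_⟩
  by_contra hne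
  obtain ⟨k, hk, hne'⟩ := mem_iUnion₂.1 (hcover (show (x, y) ∈ _ from hne))
  exact hne' (congrFun hxy ⟨k, hk⟩)

section LinearOrder

variable {X : Type*} [LinearOrder X] [TopologicalSpace X]

theorem exists_continuousOrderHom_lt [OrderTopology X] [CompactSpace X] {a b : X} (hab : a < b) :
    ∃ h : X →Co I, h a < h b := by
  obtain ⟨u, hu0, hu1, hu⟩ := exists_continuous_zero_one_of_isClosed
    (isClosed_Iic (a := a)) (isClosed_Ici (a := b)) (Iic_disjoint_Ici.2 hab.not_ge)
  have hbdd (x : X) : BddAbove (range fun y => u (min x y)) :=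
    ⟨1, forall_mem_range.2 fun y => (hu _).2⟩
  have : Nonempty X := ⟨a⟩
  have hcont : Continuous fun x => ⨆ y, u (min x y) := by
    simpa only [image_univ, sSup_range] using isCompact_univ.continuous_sSup
      (f := fun x y => u (min x y)) (by fun_prop)
  have hmono : Monotone fun x => ⨆ y, u (min x y) := fun x x' hx => ciSup_le fun y =>
    calc u (min x y) = u (min x' (min x y)) := by rw [← min_assoc, min_eq_right hx]
      _ ≤ ⨆ z, u (min x' z) := le_ciSup (hbdd x') _
  refine ⟨⟨⟨fun x => ⟨⨆ y, u (min x y), Real.iSup_nonneg fun y => (hu _).1,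
    ciSup_le fun y => (hu _).2⟩, hmono⟩, hcont.subtype_mk _⟩, ?_⟩
  calc ⨆ y, u (min a y) ≤ 0 := ciSup_le fun y => (hu0 (min_le_left a y)).le
    _ < 1 := one_pos
    _ = u (min b b) := (hu1 (min_self b).ge).symm
    _ ≤ ⨆ y, u (min b y) := le_ciSup (hbdd b) b

theorem exists_continuousOrderHom_finer {κ : Type*} [Countable κ] (h : κ → X →Co I) :
    ∃ F : X →Co I, ∀ k, Finer F (h k) := by
  have := Encodable.ofCountable κ
  obtain ⟨w, hw, c, hwc, hc⟩ := posSumOfEncodable one_pos κ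
  have h0 (k : κ) (x : X) : 0 ≤ w k * (h k x : ℝ) := mul_nonneg (hw k).le (h k x).2.1
  have hle (k : κ) (x : X) : w k * (h k x : ℝ) ≤ w k :=
    mul_le_of_le_one_right (hw k).le (h k x).2.2
  have hmono (k : κ) : Monotone fun x => w k * (h k x : ℝ) := fun x y hxy =>
    mul_le_mul_of_nonneg_left ((h k).monotone' hxy) (hw k).le
  have hsum (x : X) : Summable fun k => w k * (h k x : ℝ) :=
    hwc.summable.of_nonneg_of_le (h0 · x) (hle · x)
  have hcont : Continuous fun x => ∑' k, w k * (h k x : ℝ) :=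
    continuous_tsum (fun k => by fun_prop) hwc.summable
      fun k x => (Real.norm_of_nonneg (h0 k x)).trans_le (hle k x)
  have hlt {x y : X} (hxy : x ≤ y) {k : κ} (hk : h k x ≠ h k y) :
      ∑' k, w k * (h k x : ℝ) < ∑' k, w k * (h k y : ℝ) :=
    (hsum x).tsum_lt_tsum (fun k => hmono k hxy)
      (mul_lt_mul_of_pos_left (((h k).monotone' hxy).lt_of_ne hk) (hw k)) (hsum y)
  refine ⟨⟨⟨fun x => ⟨∑' k, w k * (h k x : ℝ), tsum_nonneg (h0 · x),
    ((hsum x).tsum_le_tsum (hle · x) hwc.summable).trans (hwc.tsum_eq.trans_le hc)⟩,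
    fun x y hxy => (hsum x).tsum_le_tsum (fun k => hmono k hxy) (hsum y)⟩,
    hcont.subtype_mk _⟩, fun k x y hxy => ?_⟩
  have hxy' : ∑' k, w k * (h k x : ℝ) = ∑' k, w k * (h k y : ℝ) := congrArg Subtype.val hxy
  by_contra hk
  rcases le_total x y with hle | hle
  · exact (hlt hle hk).ne hxy'
  · exact (hlt hle (Ne.symm hk)).ne' hxy'

theorem exists_mem_Ioo_or_covBy_of_dense [OrderTopology X] {D : Set X} (hD : Dense D) {a b : X}
    (hab : a < b) : (∃ d ∈ D, a < d ∧ d < b) ∨ a ⋖ b := by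
  by_cases hne : (Ioo a b).Nonempty
  · obtain ⟨d, hd, hdD⟩ := hD.inter_open_nonempty _ isOpen_Ioo hne
    exact .inl ⟨d, hdD, hd⟩
  · exact .inr ⟨hab, fun c hac hcb => hne ⟨c, hac, hcb⟩⟩

theorem exists_countable_forall_lt_lt [OrderTopology X] [SeparableSpace X] :
    ∃ D : Set X, D.Countable ∧
      ∀ ⦃x y z⦄, x < y → y < z → ∃ a ∈ D, ∃ b ∈ D, x ≤ a ∧ a < b ∧ b ≤ z := by
  obtain ⟨D, hDc, hD⟩ := exists_countable_dense X
  refine ⟨D ∪ ⋃ a ∈ D, {b | a ⋖ b}, hDc.union (hDc.biUnion fun a _ =>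
    Set.Subsingleton.countable fun b hb c hc => hb.unique_right hc), fun x y z hxy hyz => ?_⟩
  obtain ⟨d, ⟨hxd, hdz⟩, hdD⟩ := hD.inter_open_nonempty (Ioo x z) isOpen_Ioo ⟨y, hxy, hyz⟩
  rcases exists_mem_Ioo_or_covBy_of_dense hD hdz with ⟨d', hd'D, hdd', hd'z⟩ | hcov
  · exact ⟨d, .inl hdD, d', .inl hd'D, hxd.le, hdd', hd'z.le⟩
  · exact ⟨d, .inl hdD, z, .inr (mem_biUnion hdD hcov), hxd.le, hdz, le_rfl⟩

theorem encard_le_two_of_forall_lt_lt {α : Type*} [LinearOrder α] {s : Set α}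
    (hs : ∀ x ∈ s, ∀ y ∈ s, ∀ z ∈ s, x < y → ¬ y < z) : s.encard ≤ 2 := by
  by_contra! hlt
  obtain ⟨t, hts, ht⟩ := exists_subset_encard_eq (Order.add_one_le_of_lt hlt)
  obtain ⟨x, y, z, hxy, hxz, hyz, rfl⟩ := encard_eq_three.1 (ht.trans (by norm_num))
  simp only [insert_subset_iff, singleton_subset_iff] at hts
  rcases lt_or_gt_of_ne hxy with h₁ | h₁ <;> rcases lt_or_gt_of_ne hxz with h₂ | h₂ <;>
    rcases lt_or_gt_of_ne hyz with h₃ | h₃ <;> grind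

theorem exists_continuousOrderHom_finer_encard_le_two [OrderTopology X] [CompactSpace X]
    [SeparableSpace X] (h : X →Co I) :
    ∃ F : X →Co I, Finer F h ∧ ∀ y, (F ⁻¹' {y}).encard ≤ 2 := by
  obtain ⟨D, hDc, hD⟩ := exists_countable_forall_lt_lt (X := X)
  have := hDc.to_subtype
  choose u hu using fun p : {p : D × D // p.1 < p.2} => exists_continuousOrderHom_lt (X := X) p.2
  obtain ⟨F, hF⟩ := exists_continuousOrderHom_finer fun o : Option _ => o.elim h u
  refine ⟨F, hF none, fun y => encard_le_two_of_forall_lt_lt ?_⟩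
  rintro x hx x' - x'' hx'' hlt hlt'
  obtain ⟨a, ha, b, hb, hxa, hab, hbx⟩ := hD hlt hlt'
  have hFab : F a = F b := by
    refine le_antisymm (F.monotone' hab.le) ?_
    calc F b ≤ F x'' := F.monotone' hbx
      _ = F x := hx''.trans hx.symm
      _ ≤ F a := F.monotone' hxa
  exact (hu ⟨(⟨a, ha⟩, ⟨b, hb⟩), hab⟩).ne (hF (some _) _ _ hFab)

theorem countable_setOf_covBy_ne {α : Type*} [LinearOrder α] [TopologicalSpace α]
    [OrderTopology α] [SecondCountableTopology α] {β : Type*} [LinearOrder β] {f : β → α}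
    (hf : Monotone f) : {p : β × β | p.1 ⋖ p.2 ∧ f p.1 ≠ f p.2}.Countable := by
  refine MapsTo.countable_of_injOn (f := Prod.fst) (fun p hp => ?_) ?_
    (countable_image_lt_image_Ioi f)
  · exact ⟨f p.2, (hf hp.1.le).lt_of_ne hp.2, fun y hy => hf (hp.1.ge_of_gt hy)⟩
  · rintro ⟨a, b⟩ ⟨hab, -⟩ ⟨a', b'⟩ ⟨hab', -⟩ (rfl : a = a')
    exact Prod.ext rfl (hab.unique_right hab')

theorem secondCountableTopology_of_forall_lt [OrderTopology X] {C : Set X} (hC : C.Countable)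
    (hleft : ∀ a b, a < b → ∃ c ∈ C, a ≤ c ∧ c < b)
    (hright : ∀ a b, a < b → ∃ c ∈ C, a < c ∧ c ≤ b) : SecondCountableTopology X := by
  let B := Ioi '' C ∪ Iio '' C
  have hIoi (a : X) : Ioi a = ⋃ c ∈ C ∩ Ici a, Ioi c := by
    ext; simp only [mem_iUnion, mem_Ioi, exists_prop, mem_inter_iff, mem_Ici]; grind
  have hIio (a : X) : Iio a = ⋃ c ∈ C ∩ Iic a, Iio c := by
    ext; simp only [mem_iUnion, mem_Iio, exists_prop, mem_inter_iff, mem_Iic]; grind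
  refine ⟨⟨B, (hC.image _).union (hC.image _), ?_⟩⟩
  rw [OrderTopology.topology_eq_generate_intervals (α := X)]
  refine le_antisymm (generateFrom_anti ?_) (le_generateFrom ?_)
  · rintro _ (⟨c, -, rfl⟩ | ⟨c, -, rfl⟩)
    exacts [⟨c, .inl rfl⟩, ⟨c, .inr rfl⟩]
  · let _ := generateFrom B
    rintro _ ⟨a, rfl | rfl⟩
    · rw [hIoi]
      exact isOpen_biUnion fun c hc => .basic _ (.inl (mem_image_of_mem _ hc.1))
    · rw [hIio]
      exact isOpen_biUnion fun c hc => .basic _ (.inr (mem_image_of_mem _ hc.1))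

theorem secondCountableTopology_of_countable_covBy [OrderTopology X] [SeparableSpace X]
    (h : {p : X × X | p.1 ⋖ p.2}.Countable) : SecondCountableTopology X := by
  obtain ⟨D, hDc, hD⟩ := exists_countable_dense X
  refine secondCountableTopology_of_forall_lt
    (hDc.union ((h.image Prod.fst).union (h.image Prod.snd))) (fun a b hab => ?_) fun a b hab => ?_
  all_goals rcases exists_mem_Ioo_or_covBy_of_dense hD hab with ⟨d, hdD, had, hdb⟩ | hcov
  · exact ⟨d, .inl hdD, had.le, hdb⟩
  · exact ⟨a, .inr (.inl ⟨(a, b), hcov, rfl⟩), le_rfl, hab⟩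
  · exact ⟨d, .inl hdD, had, hdb.le⟩
  · exact ⟨b, .inr (.inr ⟨(a, b), hcov, rfl⟩), hab, le_rfl⟩

theorem exists_covBy_eq_of_not_secondCountableTopology [OrderTopology X] [SeparableSpace X]
    {α : Type*} [LinearOrder α] [TopologicalSpace α] [OrderTopology α]
    [SecondCountableTopology α] (hX : ¬ SecondCountableTopology X) {f : X → α}
    (hf : Monotone f) : ∃ a b, a ⋖ b ∧ f a = f b := by
  by_contra! hne
  have hsub : {p : X × X | p.1 ⋖ p.2} ⊆ {p | p.1 ⋖ p.2 ∧ f p.1 ≠ f p.2} :=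
    fun p hp => ⟨hp, hne _ _ hp⟩
  exact hX (secondCountableTopology_of_countable_covBy ((countable_setOf_covBy_ne hf).mono hsub))

end LinearOrder

theorem exists_continuousOrderHom_pi_finer {ι : Type*} {X : ι → Type*} [∀ i, LinearOrder (X i)]
    [∀ i, TopologicalSpace (X i)] [∀ i, OrderTopology (X i)] [∀ i, CompactSpace (X i)]
    {Z : Type*} [TopologicalSpace Z] [MetrizableSpace Z] {g : (∀ i, X i) → Z}
    (hg : Continuous g) : ∃ F : ∀ i, X i →Co I, Finer (Pi.map fun i => F i) g := by
  have hsep : Finer (fun (x : ∀ i, X i) (k : Σ i, X i →Co I) => k.2 (x k.1)) g := by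
    refine fun x y hxy => congrArg g (funext fun i => ?_)
    by_contra hne
    rcases lt_or_gt_of_ne hne with hlt | hlt <;>
      obtain ⟨h, hh⟩ := exists_continuousOrderHom_lt hlt
    · exact hh.ne (congrFun hxy ⟨i, h⟩)
    · exact hh.ne' (congrFun hxy ⟨i, h⟩)
  obtain ⟨J, hJc, hJ⟩ := exists_countable_finer
    (fun k : Σ i, X i →Co I => k.2.continuous_toFun.comp (continuous_apply k.1)) hg hsep
  have (i : ι) : Countable (Sigma.mk i ⁻¹' J) :=
    (hJc.preimage_of_injOn sigma_mk_injective.injOn).to_subtype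
  choose F hF using fun i =>
    exists_continuousOrderHom_finer fun h : Sigma.mk i ⁻¹' J => (h : X i →Co I)
  refine ⟨F, fun x y hxy => hJ x y (funext fun k => ?_)⟩
  exact hF k.1.1 ⟨k.1.2, k.2⟩ _ _ (congrFun hxy k.1.1)

section Scattered

variable {X Y : Type*} [TopologicalSpace X] [TopologicalSpace Y]

theorem accPt_principal_iff_forall_isOpen {x : X} {T : Set X} (hx : x ∈ T) :
    AccPt x (𝓟 T) ↔ ∀ U : Set X, IsOpen U → U ∩ T ≠ {x} := by
  rw [accPt_iff_nhds]
  constructor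
  · intro h U hU hUT
    have hxU : x ∈ U ∩ T := hUT ▸ mem_singleton x
    obtain ⟨y, hy, hyx⟩ := h U (hU.mem_nhds hxU.1)
    exact hyx (hUT.subset hy)
  · intro h V hV
    obtain ⟨U, hUV, hU, hxU⟩ := mem_nhds_iff.1 hV
    obtain ⟨y, hy, hyx⟩ : ∃ y ∈ U ∩ T, y ≠ x := by
      by_contra! hsub
      exact h U hU (Subset.antisymm hsub (singleton_subset_iff.2 ⟨hxU, hx⟩))
    exact ⟨y, ⟨hUV hy.1, hy.2⟩, hyx⟩

theorem not_isScatteredSet_iff {S : Set X} :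
    ¬ IsScatteredSet S ↔ ∃ T ⊆ S, T.Nonempty ∧ Preperfect T := by
  simp only [IsScatteredSet, not_forall, not_exists, not_and, exists_prop]
  exact exists_congr fun T => and_congr_right fun _ => and_congr_right fun _ =>
    forall₂_congr fun x hx => (accPt_principal_iff_forall_isOpen hx).symm

theorem exists_accPt_of_not_isScatteredSet {S : Set X} (hS : ¬ IsScatteredSet S) :
    ∃ x, AccPt x (𝓟 S) := by
  obtain ⟨T, hTS, ⟨x, hx⟩, hT⟩ := not_isScatteredSet_iff.1 hS
  exact ⟨x, (hT x hx).mono (principal_mono.2 hTS)⟩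

theorem accPt_image_of_finite_fiber [T1Space X] {f : X → Y} {x : X} {T : Set X}
    (hx : AccPt x (𝓟 T)) (hf : ContinuousAt f x) (hfin : (f ⁻¹' {f x}).Finite) :
    AccPt (f x) (𝓟 (f '' T)) := by
  rw [accPt_iff_frequently] at hx ⊢
  have hne : ∀ᶠ y in 𝓝 x, y ≠ x → f y ≠ f x := by
    filter_upwards [(hfin.subset sdiff_subset).isClosed.compl_mem_nhds
      (notMem_sdiff_of_mem (mem_singleton x))] with y hy hyx hfy
    exact hy ⟨hfy, hyx⟩
  exact hf.tendsto.frequently ((hx.and_eventually hne).mono fun y hy =>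
    ⟨hy.2 hy.1.1, mem_image_of_mem f hy.1.2⟩)

theorem not_isScatteredSet_image [T1Space X] {f : X → Y} (hf : Continuous f)
    (hfin : ∀ x, (f ⁻¹' {f x}).Finite) {S : Set X} (hS : ¬ IsScatteredSet S) :
    ¬ IsScatteredSet (f '' S) := by
  obtain ⟨T, hTS, hne, hT⟩ := not_isScatteredSet_iff.1 hS
  refine not_isScatteredSet_iff.2 ⟨f '' T, image_mono hTS, hne.image f, ?_⟩
  exact forall_mem_image.2 fun x hx =>
    accPt_image_of_finite_fiber (hT x hx) hf.continuousAt (hfin x)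

end Scattered

section Monotone

variable {α β γ : Type*} [LinearOrder α] [TopologicalSpace α] [OrderClosedTopology α]
  [LinearOrder β] {F : α → β} {l : Filter γ} [NeBot l] {u : γ → α} {a : α}

theorem isLeast_fiber_of_tendsto (hF : Monotone F) (hu : Tendsto u l (𝓝 a))
    (hlt : ∀ᶠ t in l, F (u t) < F a) : IsLeast (F ⁻¹' {F a}) a := by
  refine ⟨rfl, fun x (hx : F x = F a) => le_of_tendsto hu (hlt.mono fun t ht => ?_)⟩
  exact (hF.reflect_lt (ht.trans_eq hx.symm)).le

theorem isGreatest_fiber_of_tendsto (hF : Monotone F) (hu : Tendsto u l (𝓝 a))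
    (hgt : ∀ᶠ t in l, F a < F (u t)) : IsGreatest (F ⁻¹' {F a}) a := by
  refine ⟨rfl, fun x (hx : F x = F a) => ge_of_tendsto hu (hgt.mono fun t ht => ?_)⟩
  exact (hF.reflect_lt (hx.trans_lt ht)).le

end Monotone

section Ultrafilter

theorem exists_ultrafilter_eventually_lt_or_gt {ι : Type*} [Finite ι] {Y : ι → Type*}
    [∀ i, LinearOrder (Y i)] [∀ i, TopologicalSpace (Y i)] {q : ∀ i, Y i} {Q : Set (∀ i, Y i)}
    (hq : AccPt q (𝓟 Q)) :
    ∃ W : Ultrafilter (∀ i, Y i), ↑W ≤ 𝓝 q ∧ Q ∈ W ∧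
      ∃ i, (∀ᶠ y : ∀ i, Y i in W, y i < q i) ∨ ∀ᶠ y : ∀ i, Y i in W, q i < y i := by
  obtain ⟨W, hW⟩ := @exists_ultrafilter_le _ _ hq
  obtain ⟨hWq, hWQ⟩ := le_inf_iff.1 hW
  refine ⟨W, hWq.trans nhdsWithin_le_nhds, le_principal_iff.1 hWQ, ?_⟩
  have hne : ∀ᶠ y : ∀ i, Y i in W, ∃ i, y i ≠ q i :=
    mem_of_superset (hWq self_mem_nhdsWithin) fun y hy => Function.ne_iff.1 hy
  obtain ⟨i, hi⟩ := Ultrafilter.eventually_exists_iff.1 hne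
  exact ⟨i, Ultrafilter.eventually_or.1 (hi.mono fun y hy => lt_or_gt_of_ne hy)⟩

theorem exists_ultrafilter_map_eq_of_isCompact {X Y : Type*} [TopologicalSpace X] {f : X → Y}
    {P : Set X} (hP : IsCompact P) {W : Ultrafilter Y} (hW : f '' P ∈ W) :
    ∃ V : Ultrafilter X, V.map f = W ∧ ∃ p ∈ P, ↑V ≤ 𝓝 p :=
  ⟨.ofComapInfPrincipal hW, Ultrafilter.ofComapInfPrincipal_eq_of_map hW,
    hP.ultrafilter_le_nhds _ (le_principal_iff.2 (Ultrafilter.ofComapInfPrincipal_mem hW))⟩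

end Ultrafilter

theorem exists_subsingleton_forall_image_pi_map_eq {ι : Type*} [Finite ι] {X Y : ι → Type*}
    [∀ i, LinearOrder (X i)] [∀ i, TopologicalSpace (X i)] [∀ i, OrderClosedTopology (X i)]
    [∀ i, LinearOrder (Y i)] [∀ i, TopologicalSpace (Y i)] [∀ i, T2Space (Y i)]
    {F : ∀ i, X i → Y i} (hF : ∀ i, Continuous (F i)) (hFm : ∀ i, Monotone (F i))
    {Q : Set (∀ i, Y i)} (hQ : ¬ IsScatteredSet Q) :
    ∃ (q : ∀ i, Y i) (i : ι) (t : Set (X i)), t.Subsingleton ∧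
      ∀ P, IsCompact P → Pi.map F '' P = Q → ∃ p ∈ P, Pi.map F p = q ∧ p i ∈ t := by
  obtain ⟨q, hq⟩ := exists_accPt_of_not_isScatteredSet hQ
  obtain ⟨W, hWq, hWQ, i, hi⟩ := exists_ultrafilter_eventually_lt_or_gt hq
  have hlift (P : Set (∀ i, X i)) (hP : IsCompact P) (hPQ : Pi.map F '' P = Q) :
      ∃ p ∈ P, Pi.map F p = q ∧ ∃ V : Ultrafilter (∀ i, X i), V.map (Pi.map F) = W ∧
        Tendsto (Function.eval i) V (𝓝 (p i)) := by
    obtain ⟨V, rfl, p, hpP, hVp⟩ := exists_ultrafilter_map_eq_of_isCompact hP (hPQ ▸ hWQ)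
    have hVF : Tendsto (Pi.map F) V (𝓝 (Pi.map F p)) :=
      (Continuous.piMap hF).continuousAt.mono_left hVp
    exact ⟨p, hpP, tendsto_nhds_unique hVF hWq, V, rfl,
      (continuous_apply i).continuousAt.mono_left hVp⟩
  rcases hi with hlt | hgt
  · refine ⟨q, i, {a | IsLeast (F i ⁻¹' {q i}) a}, fun a ha b hb => ha.unique hb,
      fun P hP hPQ => ?_⟩
    obtain ⟨p, hpP, rfl, V, rfl, hV⟩ := hlift P hP hPQ
    exact ⟨p, hpP, rfl, isLeast_fiber_of_tendsto (hFm i) hV hlt⟩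
  · refine ⟨q, i, {a | IsGreatest (F i ⁻¹' {q i}) a}, fun a ha b hb => ha.unique hb,
      fun P hP hPQ => ?_⟩
    obtain ⟨p, hpP, rfl, V, rfl, hV⟩ := hlift P hP hPQ
    exact ⟨p, hpP, rfl, isGreatest_fiber_of_tendsto (hFm i) hV hgt⟩

section Cardinality

variable {ι : Type*} [Fintype ι] [DecidableEq ι] {n : ℕ} {α : ι → Type*} {C : ∀ i, Set (α i)}
  {i₀ : ι}

theorem prod_ite_one_two (hn : Fintype.card ι = n + 1) (i₀ : ι) :
    ∏ i, (if i = i₀ then 1 else 2 : ℕ∞) = 2 ^ n := by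
  rw [Fintype.prod_eq_mul_prod_compl i₀, if_pos rfl, one_mul]
  calc ∏ i ∈ {i₀}ᶜ, (if i = i₀ then 1 else 2 : ℕ∞) = ∏ i ∈ ({i₀}ᶜ : Finset ι), 2 :=
        Finset.prod_congr rfl fun i hi => if_neg (by simpa using hi)
    _ = 2 ^ n := by simp [Finset.card_compl, hn]

theorem encard_pi_le_two_pow (hn : Fintype.card ι = n + 1)
    (hC : ∀ i, (C i).encard ≤ if i = i₀ then 1 else 2) : (univ.pi C).encard ≤ 2 ^ n := by
  rw [encard_pi_eq_prod_encard, ← prod_ite_one_two hn i₀]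
  exact Finset.prod_le_prod' fun i _ => hC i

theorem encard_pi_eq_two_pow (hn : Fintype.card ι = n + 1)
    (hC : ∀ i, (C i).encard = if i = i₀ then 1 else 2) : (univ.pi C).encard = 2 ^ n := by
  rw [encard_pi_eq_prod_encard, ← prod_ite_one_two hn i₀]
  exact Finset.prod_congr rfl fun i _ => hC i

theorem encard_le_encard_of_pairwise_disjoint {β : Type*} {Ps : Set (Set β)} {B : Set β}
    (hPs : Ps.Pairwise Disjoint) (hB : ∀ P ∈ Ps, (P ∩ B).Nonempty) : Ps.encard ≤ B.encard := by
  rcases Ps.eq_empty_or_nonempty with rfl | ⟨P₀, hP₀⟩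
  · simp
  have : Nonempty β := (hB P₀ hP₀).to_type
  choose! p hp using hB
  refine encard_le_encard_of_injOn (fun P hP => (hp P hP).2) fun P hP P' hP' heq => ?_
  exact hPs.eq hP hP' (not_disjoint_iff.2 ⟨p P, (hp P hP).1, heq ▸ (hp P' hP').1⟩)

end Cardinality

section Slice

variable {ι : Type*} [DecidableEq ι] {X : ι → Type*} {i₀ : ι} {B : Set (∀ i, X i)}

theorem pairwiseDisjoint_range_update (hB : ∀ c ∈ B, ∀ c' ∈ B, c i₀ = c' i₀) :
    B.PairwiseDisjoint fun c => range (Function.update c i₀) := by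
  intro c hc c' hc' hne
  obtain ⟨j, hj⟩ := Function.ne_iff.1 hne
  have hj₀ : j ≠ i₀ := by
    rintro rfl
    exact hj (hB c hc c' hc')
  refine disjoint_left.2 ?_
  rintro _ ⟨s, rfl⟩ ⟨t, ht⟩
  have htj := congrFun ht j
  rw [Function.update_of_ne hj₀, Function.update_of_ne hj₀] at htj
  exact hj htj.symm

theorem injOn_range_update (hB : ∀ c ∈ B, ∀ c' ∈ B, c i₀ = c' i₀) :
    InjOn (fun c => range (Function.update c i₀)) B := by
  intro c hc c' hc' (heq : range _ = range _)
  have hmem : c ∈ range (Function.update c i₀) := ⟨c i₀, Function.update_eq_self i₀ c⟩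
  exact (pairwiseDisjoint_range_update hB).elim_set hc hc' c hmem (heq ▸ hmem)

theorem looseFamily_range_update [∀ i, TopologicalSpace (X i)] [∀ i, T2Space (X i)]
    [CompactSpace (X i₀)] {Y : Type*} [TopologicalSpace Y] {f : (∀ i, X i) → Y}
    (hB : ∀ c ∈ B, ∀ c' ∈ B, c i₀ = c' i₀) {Q : Set Y} (hQ : ¬ IsScatteredSet Q)
    (hfQ : ∀ c ∈ B, range (f ∘ Function.update c i₀) = Q) :
    LooseFamily f ((fun c => range (Function.update c i₀)) '' B) := by
  refine ⟨(injOn_range_update hB).pairwise_image.2 (pairwiseDisjoint_range_update hB),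
    forall_mem_image.2 fun c _ => ?_, Q, hQ, forall_mem_image.2 fun c hc => ?_⟩
  · exact (isCompact_range (continuous_const.update i₀ continuous_id)).isClosed
  · rw [← range_comp, hfQ c hc]

end Slice

theorem exists_forall_ne_not {ι : Type*} [Nonempty ι] {p : ι → Prop}
    (hp : ∀ i j, p i → p j → i = j) : ∃ i₀, ∀ i ≠ i₀, ¬ p i := by
  by_cases h : ∃ i₀, p i₀
  · obtain ⟨i₀, hi₀⟩ := h
    exact ⟨i₀, fun i hne hi => hne (hp i i₀ hi hi₀)⟩
  · exact ⟨Classical.arbitrary ι, fun i _ hi => h ⟨i, hi⟩⟩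

section Product

variable {ι : Type*} [Fintype ι] {n : ℕ}

theorem isTightCard_pi_map (hn : Fintype.card ι = n + 1) {X Y : ι → Type*}
    [∀ i, LinearOrder (X i)] [∀ i, TopologicalSpace (X i)] [∀ i, OrderClosedTopology (X i)]
    [∀ i, CompactSpace (X i)] [∀ i, LinearOrder (Y i)] [∀ i, TopologicalSpace (Y i)]
    [∀ i, T2Space (Y i)] {F : ∀ i, X i → Y i} (hF : ∀ i, Continuous (F i))
    (hFm : ∀ i, Monotone (F i)) (hF2 : ∀ i y, (F i ⁻¹' {y}).encard ≤ 2) :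
    IsTightCard ((2 ^ n + 1 : ℕ) : Cardinal) (Pi.map F) := by
  classical
  rintro ⟨Ps, ⟨hdisj, hclosed, Q, hQ, hPQ⟩, hcard⟩
  obtain ⟨q, i, t, ht, hmeet⟩ := exists_subsingleton_forall_image_pi_map_eq hF hFm hQ
  let C : ∀ k, Set (X k) := Function.update (fun k => F k ⁻¹' {q k}) i t
  have hC (k : ι) : (C k).encard ≤ if k = i then 1 else 2 := by
    rcases eq_or_ne k i with rfl | hk
    · simpa [C] using encard_le_one_iff_subsingleton.2 ht
    · simpa [C, hk] using hF2 k (q k)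
  have hmeetC (P : Set (∀ i, X i)) (hP : P ∈ Ps) : (P ∩ univ.pi C).Nonempty := by
    obtain ⟨p, hpP, hpq, hpt⟩ := hmeet P (hclosed P hP).isCompact (hPQ P hP)
    refine ⟨p, hpP, fun k _ => ?_⟩
    rcases eq_or_ne k i with rfl | hk
    · simpa [C] using hpt
    · simpa [C, hk] using congrFun hpq k
  have hPs : Ps.encard = (2 ^ n + 1 : ℕ) := Cardinal.toENat_eq_natCast.2 hcard
  have hle : ((2 ^ n + 1 : ℕ) : ℕ∞) ≤ (2 ^ n : ℕ) := by
    calc ((2 ^ n + 1 : ℕ) : ℕ∞) = Ps.encard := hPs.symm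
      _ ≤ (univ.pi C).encard := encard_le_encard_of_pairwise_disjoint hdisj hmeetC
      _ ≤ 2 ^ n := encard_pi_le_two_pow hn hC
      _ = (2 ^ n : ℕ) := by norm_cast
  exact (Nat.lt_succ_self _).not_ge (Nat.cast_le.1 hle)

theorem isDissipatedCard_pi (hn : Fintype.card ι = n + 1) {X : ι → Type*}
    [∀ i, LinearOrder (X i)] [∀ i, TopologicalSpace (X i)] [∀ i, OrderTopology (X i)]
    [∀ i, CompactSpace (X i)] [∀ i, SeparableSpace (X i)] :
    IsDissipatedCard ((2 ^ n + 1 : ℕ) : Cardinal) (∀ i, X i) := by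
  intro Z _ _ _ g hg
  obtain ⟨G, hG⟩ := exists_continuousOrderHom_pi_finer hg
  choose F hFG hF2 using fun i => exists_continuousOrderHom_finer_encard_le_two (G i)
  have hF (i : ι) : Continuous fun x => ULift.up (F i x) :=
    continuous_uliftUp.comp (F i).continuous_toFun
  refine ⟨ι → ULift I, inferInstance, inferInstance, inferInstance,
    Pi.map fun i x => ULift.up (F i x), .piMap hF,
    isTightCard_pi_map hn hF (fun i => (F i).monotone') fun i y => ?_, fun x y hxy => ?_⟩
  · convert hF2 i y.down using 2
    ext x
    exact ULift.ext_iff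
  · exact hG x y (funext fun i => hFG i _ _ (ULift.up_injective (congrFun hxy i)))

theorem not_isTightCard_of_finer_pi_map [DecidableEq ι] (hn : Fintype.card ι = n + 1)
    {X : ι → Type*} [∀ i, TopologicalSpace (X i)] [∀ i, T2Space (X i)] {i₀ : ι}
    [CompactSpace (X i₀)] {Y : Type*} [TopologicalSpace Y] {f : (∀ i, X i) → Y}
    {E : ι → Type*} {F : ∀ i, X i → E i} (hFf : Finer (Pi.map F) f) {C : ∀ i, Set (X i)}
    (hC : ∀ i, (C i).encard = if i = i₀ then 1 else 2)
    (hCF : ∀ i, ∀ a ∈ C i, ∀ b ∈ C i, F i a = F i b)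
    (hslice : ∀ c, ¬ IsScatteredSet (range (f ∘ Function.update c i₀))) :
    ¬ IsTightCard ((2 ^ n : ℕ) : Cardinal) f := by
  have hcard : (univ.pi C).encard = (2 ^ n : ℕ) := by
    rw [encard_pi_eq_two_pow hn hC]
    norm_cast
  obtain ⟨c₀, hc₀⟩ : (univ.pi C).Nonempty := by
    rw [← encard_ne_zero, hcard]
    positivity
  have hC₀ : (C i₀).Subsingleton :=
    encard_le_one_iff_subsingleton.1 ((hC i₀).trans (if_pos rfl)).le
  have hB : ∀ c ∈ univ.pi C, ∀ c' ∈ univ.pi C, c i₀ = c' i₀ := fun c hc c' hc' =>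
    hC₀ (hc i₀ trivial) (hc' i₀ trivial)
  have hf (c : ∀ i, X i) (hc : c ∈ univ.pi C) :
      range (f ∘ Function.update c i₀) = range (f ∘ Function.update c₀ i₀) := by
    refine congrArg range (funext fun t => hFf _ _ (funext fun j => ?_))
    rcases eq_or_ne j i₀ with rfl | hj
    · simp
    · simpa [hj] using hCF j _ (hc j trivial) _ (hc₀ j trivial)
  refine not_not_intro ⟨_, looseFamily_range_update hB (hslice c₀) hf, ?_⟩
  rw [Cardinal.mk_image_eq_of_injOn _ _ (injOn_range_update hB)]
  exact Cardinal.toENat_eq_natCast.1 hcard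

theorem not_isDissipatedCard_pi (hn : Fintype.card ι = n + 1) {X : ι → Type*}
    [∀ i, LinearOrder (X i)] [∀ i, TopologicalSpace (X i)] [∀ i, OrderTopology (X i)]
    [∀ i, CompactSpace (X i)] [∀ i, SeparableSpace (X i)] {i₀ : ι}
    (hX₀ : ¬ IsScatteredSet (univ : Set (X i₀)))
    (hX : ∀ i ≠ i₀, ¬ SecondCountableTopology (X i)) :
    ¬ IsDissipatedCard ((2 ^ n : ℕ) : Cardinal) (∀ i, X i) := by
  classical
  intro h
  obtain ⟨F₀, -, hF₀⟩ := exists_continuousOrderHom_finer_encard_le_two (X := X i₀)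
    ⟨⟨fun _ => 0, monotone_const⟩, continuous_const⟩
  obtain ⟨Y, _, _, _, f, hf, htight, hfF₀⟩ := h (ULift I) (fun x => ULift.up (F₀ (x i₀)))
    (continuous_uliftUp.comp (F₀.continuous_toFun.comp (continuous_apply i₀)))
  obtain ⟨F, hFf⟩ := exists_continuousOrderHom_pi_finer hf
  have hC (i : ι) : ∃ C : Set (X i), C.encard = (if i = i₀ then 1 else 2) ∧
      ∀ a ∈ C, ∀ b ∈ C, F i a = F i b := by
    rcases eq_or_ne i i₀ with rfl | hi
    · obtain ⟨a, -⟩ := exists_accPt_of_not_isScatteredSet hX₀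
      exact ⟨{a}, by simp, by simp⟩
    · obtain ⟨a, b, hab, hFab⟩ :=
        exists_covBy_eq_of_not_secondCountableTopology (hX i hi) (F i).monotone'
      refine ⟨{a, b}, by simp [hi, encard_pair hab.lt.ne], ?_⟩
      rintro x (rfl | rfl) y (rfl | rfl)
      exacts [rfl, hFab, hFab.symm, rfl]
  choose C hCcard hCF using hC
  refine not_isTightCard_of_finer_pi_map hn hFf hCcard hCF (fun c => ?_) htight
  rw [← image_univ]
  refine not_isScatteredSet_image (hf.comp (continuous_const.update i₀ continuous_id))
    (fun a => ?_) hX₀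
  refine (finite_of_encard_le_coe (hF₀ (F₀ a))).subset fun b hb => ?_
  simpa using hfF₀ _ _ hb

theorem stmt13_general (hn : Fintype.card ι = n + 1) (X : ι → Type*)
    [∀ i, LinearOrder (X i)] [∀ i, TopologicalSpace (X i)] [∀ i, OrderTopology (X i)]
    [∀ i, CompactSpace (X i)] [∀ i, SeparableSpace (X i)] :
    IsDissipatedCard ((2 ^ n + 1 : ℕ) : Cardinal) (∀ i, X i) ∧
      ∀ i₀, ¬ IsScatteredSet (univ : Set (X i₀)) →
        (∀ i ≠ i₀, ¬ SecondCountableTopology (X i)) →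
        ¬ IsDissipatedCard ((2 ^ n : ℕ) : Cardinal) (∀ i, X i) :=
  ⟨isDissipatedCard_pi hn, fun _ => not_isDissipatedCard_pi hn⟩

end Product

/-- A product of `n+1` compact separable LOTSes is `(2^n + 1)`-dissipated; moreover, if
all factors are non-scattered and at most one is second countable, the product is not
`2^n`-dissipated. -/
theorem stmt13 (n : ℕ) (X : Fin (n + 1) → Type)
    [∀ i, LinearOrder (X i)] [∀ i, TopologicalSpace (X i)] [∀ i, OrderTopology (X i)]
    [∀ i, CompactSpace (X i)] [∀ i, TopologicalSpace.SeparableSpace (X i)] :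
    IsDissipatedCard ((2 ^ n + 1 : ℕ) : Cardinal.{0}) (∀ i, X i) ∧
      ((∀ i, ¬ IsScatteredSet (Set.univ : Set (X i))) →
        (∀ i j, SecondCountableTopology (X i) → SecondCountableTopology (X j) → i = j) →
        ¬ IsDissipatedCard ((2 ^ n : ℕ) : Cardinal.{0}) (∀ i, X i)) := by
  refine (stmt13_general (Fintype.card_fin (n + 1)) X).imp_right fun h hns hsc => ?_
  exact (exists_forall_ne_not hsc).elim fun i₀ hi₀ => h i₀ (hns i₀) hi₀
end

section
/- Let L be a compact LOTS, let 1 ≤ m < ω, and let f : [ω₁]^m → L be continuous, where [ω₁]^m = {(α₁,…,α_m) ∈ ω₁^m : α₁ < ⋯ < α_m} carries the subspace topology from the product of order topologies. Then there exist a club C ⊆ ω₁, a continuous map g : C → L (with C given the subspace topology from ω₁), and an index j ∈ {1,…,m} such that f(α₁,…,α_m) = g(α_j) for all (α₁,…,α_m) ∈ [C]^m, and g is either strictly increasing, or strictly decreasing, or constant. -/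
open Set

noncomputable section

/-- The first uncountable ordinal. -/
def omega1 : Ordinal.{0} := (Cardinal.aleph 1).ord

/-- `ω₁` as a linearly ordered set: the set of ordinals below `ω₁`. -/
abbrev Omega1 : Type 1 := ↥(Set.Iio omega1)

/-- The order topology on `ω₁`. -/
instance : TopologicalSpace Omega1 := Preorder.topology Omega1

instance : OrderTopology Omega1 := ⟨rfl⟩

/-- A club in `ω₁` : a subset closed in the order topology and unbounded. -/
def IsClubIn (C : Set Omega1) : Prop :=
  IsClosed C ∧ ∀ x : Omega1, ∃ y ∈ C, x ≤ y

/-!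
Write `f_a (β) = f (a, β)` for `a ∈ [ω₁]^(m-1)`. A closed set of countable ordinals is either
bounded or a club, so by compactness each `f_a` converges along the club filter, and since `ω₁` is
locally countable the limit `s (a)` depends continuously on `a`. By induction `s (a) = g (a_j)` on a
club.

If `g` is strictly monotone, approximating `a` by tuples with a smaller `j`-th coordinate traps
`f_a` between the values of `g` below `a_j` and `g (a_j)`, so `f_a` is eventually equal to
`g (a_j)`, and a diagonal intersection yields `f (v) = g (v_j)` on a club.

If `g` is constant with value `c`, then each `f_a` tends to `c`, and it eventually stays below `c`,
above `c`, or at `c`. Two such maps approaching `c` from the same side agree on a club. So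
the side is a continuous function of `a` with finitely many values, hence constant on a club, and
`f` depends only on its last coordinate.
-/

open Filter Topology Cardinal

/-! ### Countable ordinals -/

theorem isOpen_Iic_of_wellFoundedLT {α : Type*} [LinearOrder α] [WellFoundedLT α] [NoMaxOrder α]
    [TopologicalSpace α] [OrderTopology α] (a : α) : IsOpen (Iic a) := by
  let := SuccOrder.ofLinearWellFoundedLT α
  rw [← Order.Iio_succ a]
  exact isOpen_Iio

theorem dirSupClosed_of_isClosed {α : Type*} [LinearOrder α] [TopologicalSpace α]
    [OrderTopology α] {s : Set α} (hs : IsClosed s) : DirSupClosed s :=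
  fun _ hd hne _ _ ha => hs.closure_subset (closure_mono hd (ha.mem_closure hne))

theorem mem_closure_of_forall_lt {α : Type*} [LinearOrder α] [TopologicalSpace α]
    [OrderTopology α] {s : Set α} {a b : α} (hb : b < a)
    (h : ∀ x < a, ∃ y ∈ s, x < y ∧ y ≤ a) : a ∈ closure s := by
  refine mem_closure_iff_nhds.2 fun t ht => ?_
  obtain ⟨x, hx, hxt⟩ := exists_Ioc_subset_of_mem_nhds ht ⟨b, hb⟩
  obtain ⟨y, hys, hxy, hya⟩ := h x hx
  exact ⟨y, hxt ⟨hxy, hya⟩, hys⟩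

namespace Omega1

theorem countable_Iic (a : Omega1) : (Iic a).Countable := by
  have ha : (Iio a.1).Countable := by
    rw [← le_aleph0_iff_set_countable, mk_Iio_ordinal, ← lift_aleph0.{1, 0}, Cardinal.lift_le,
      ← Order.lt_succ_iff, succ_aleph0]
    exact lt_ord.1 a.2
  rw [← Iio_insert]
  exact (ha.preimage Subtype.val_injective).insert a

theorem cof_eq_aleph_one : Order.cof Omega1 = ℵ₁ := by
  rw [Ordinal.cof_Iio, omega1, ← Ordinal.lift_cof]
  simp

theorem bddAbove_of_countable {S : Set Omega1} (hS : S.Countable) : BddAbove S := by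
  refine .of_not_isCofinal fun h => (Order.cof_le h).not_gt ?_
  rw [cof_eq_aleph_one, ← succ_aleph0, Order.lt_succ_iff]
  exact le_aleph0_iff_set_countable.2 hS

instance : Nonempty Omega1 := ⟨⟨0, by simp [omega1, Ordinal.omega_pos]⟩⟩

instance : NoMaxOrder Omega1 :=
  (isSuccLimit_ord (aleph0_le_aleph 1)).isSuccPrelimit.noMaxOrder_Iio

theorem countable_Iic_pi {ι : Type*} [Finite ι] (a : ι → Omega1) : (Iic a).Countable := by
  rw [← pi_univ_Iic]
  exact countable_univ_pi fun i => countable_Iic (a i)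

theorem exists_gt_forall_lt_imp_lt (φ : Omega1 → Omega1) (x : Omega1) :
    ∃ γ > x, ∀ z < γ, φ z < γ := by
  have hbound (y : Omega1) : ∃ b, ∀ z ≤ y, φ z < b := by
    obtain ⟨b, hb⟩ := bddAbove_of_countable ((countable_Iic y).image φ)
    obtain ⟨b', hb'⟩ := exists_gt b
    exact ⟨b', fun z hz => (hb ⟨z, hz, rfl⟩).trans_lt hb'⟩
  choose ψ hψ using hbound
  obtain ⟨b, hb⟩ := bddAbove_of_countable (countable_range fun n => ψ^[n] x)
  obtain ⟨b', hb'⟩ := exists_gt b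
  obtain ⟨γ, hγ, hmin⟩ := wellFounded_lt.has_min {y | ∀ n, ψ^[n] x < y}
    ⟨b', fun n => (hb ⟨n, rfl⟩).trans_lt hb'⟩
  refine ⟨γ, hγ 0, fun z hz => ?_⟩
  obtain ⟨n, hn⟩ : ∃ n, z ≤ ψ^[n] x := by
    by_contra! h
    exact hmin z h hz
  calc
    φ z < ψ (ψ^[n] x) := hψ _ z hn
    _ = ψ^[n + 1] x := (Function.iterate_succ_apply' ψ n x).symm
    _ < γ := hγ (n + 1)

end Omega1

/-! ### Clubs and the club filter -/

namespace IsClubIn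

theorem Ici (x : Omega1) : IsClubIn (Ici x) :=
  ⟨isClosed_Ici, fun y => ⟨max x y, le_max_left x y, le_max_right x y⟩⟩

theorem exists_gt {C : Set Omega1} (hC : IsClubIn C) (x : Omega1) : ∃ y ∈ C, x < y := by
  obtain ⟨x', hx'⟩ := NoMaxOrder.exists_gt x
  obtain ⟨y, hy, hxy⟩ := hC.2 x'
  exact ⟨y, hy, hx'.trans_le hxy⟩

theorem iInter_of_countable {ι : Type*} [Countable ι] {D : ι → Set Omega1}
    (hD : ∀ i, IsClubIn (D i)) : IsClubIn (⋂ i, D i) := by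
  have hcof : Order.cof Omega1 ≠ ℵ₀ := by
    rw [Omega1.cof_eq_aleph_one]
    exact aleph0_lt_aleph_one.ne'
  have hclub (i : ι) : IsClub (D i) := ⟨dirSupClosed_of_isClosed (hD i).1, (hD i).2⟩
  exact ⟨isClosed_iInter fun i => (hD i).1, (IsClub.iInter_of_countable hcof hclub).isCofinal⟩

theorem diagonalIntersection {D : Omega1 → Set Omega1} (hD : ∀ x, IsClubIn (D x)) :
    IsClubIn {β | ∀ x < β, β ∈ D x} := by
  refine ⟨?_, fun x₀ => ?_⟩
  · have heq : {β | ∀ x < β, β ∈ D x} = ⋂ x, (Iic x ∪ D x) := by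
      ext β
      simp [or_iff_not_imp_left]
    rw [heq]
    exact isClosed_iInter fun x => isClosed_Iic.union (hD x).1
  · have hnext (y : Omega1) : ∃ z, y < z ∧ ∀ x ≤ y, z ∈ D x := by
      have : Countable (Set.Iic y) := (Omega1.countable_Iic y).to_subtype
      obtain ⟨z, hz, hyz⟩ := (iInter_of_countable fun x : Set.Iic y => hD x).exists_gt y
      exact ⟨z, hyz, fun x hx => mem_iInter.1 hz ⟨x, hx⟩⟩
    choose φ hφ hφD using hnext
    obtain ⟨γ, hγ, hφγ⟩ := Omega1.exists_gt_forall_lt_imp_lt φ x₀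
    refine ⟨γ, fun x hx => (hD x).1.closure_subset ?_, hγ.le⟩
    refine mem_closure_of_forall_lt hx fun z hz => ⟨φ (max x z), hφD _ x (le_max_left x z), ?_⟩
    exact ⟨(le_max_right x z).trans_lt (hφ _), (hφγ _ (max_lt hx hz)).le⟩

end IsClubIn

/-- The filter on `ω₁` generated by the clubs; "eventually along `clubFilter`" means "on a
club". -/
def clubFilter : Filter Omega1 :=
  Filter.ofCountableInter {S | ∃ C, IsClubIn C ∧ C ⊆ S}
    (fun 𝒮 h𝒮 h => by
      have : Countable 𝒮 := h𝒮.to_subtype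
      choose D hD hDS using fun S : 𝒮 => h S.2
      exact ⟨⋂ S, D S, .iInter_of_countable hD, subset_sInter fun S hS =>
        (iInter_subset D ⟨S, hS⟩).trans (hDS ⟨S, hS⟩)⟩)
    fun _ _ ⟨C, hC, hCS⟩ hST => ⟨C, hC, hCS.trans hST⟩

instance : CountableInterFilter clubFilter := by
  unfold clubFilter
  infer_instance

theorem hasBasis_clubFilter : clubFilter.HasBasis IsClubIn id :=
  ⟨fun _ => Iff.rfl⟩

theorem IsClubIn.mem_clubFilter {C : Set Omega1} (hC : IsClubIn C) : C ∈ clubFilter :=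
  hasBasis_clubFilter.mem_of_mem hC

instance : NeBot clubFilter :=
  hasBasis_clubFilter.neBot_iff.2 fun hC => (hC.2 (Classical.arbitrary _)).imp fun _ h => h.1

namespace clubFilter

theorem eventually_gt (x : Omega1) : ∀ᶠ β in clubFilter, x < β := by
  obtain ⟨y, hy⟩ := exists_gt x
  exact mem_of_superset (IsClubIn.Ici y).mem_clubFilter fun _ hβ => hy.trans_le hβ

theorem eventually_forall_lt {P : Omega1 → Omega1 → Prop}
    (hP : ∀ x, ∀ᶠ β in clubFilter, P x β) : ∀ᶠ β in clubFilter, ∀ x < β, P x β := by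
  choose D hD hDP using hP
  exact ⟨_, .diagonalIntersection hD, fun β hβ x hx => hDP x (hβ x hx)⟩

theorem eventually_forall_tuple_lt {ι : Type*} [Finite ι] {P : (ι → Omega1) → Omega1 → Prop}
    (hP : ∀ a, ∀ᶠ β in clubFilter, P a β) :
    ∀ᶠ β in clubFilter, ∀ a, (∀ i, a i < β) → P a β := by
  have hdiag := eventually_forall_lt fun x =>
    (eventually_countable_ball (Omega1.countable_Iic_pi fun _ : ι => x)).2 fun a _ => hP a
  filter_upwards [eventually_gt (Classical.arbitrary _), hdiag] with β h₀ hβ a ha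
  have : Nonempty (Iio β) := ⟨⟨_, h₀⟩⟩
  obtain ⟨⟨x, hx⟩, hax⟩ := Finite.exists_le fun i => (⟨a i, ha i⟩ : Iio β)
  exact hβ x hx a hax

theorem eventually_mem_closure_inter_Iio {S : Set Omega1} (hS : S ∈ clubFilter) :
    ∀ᶠ γ in clubFilter, γ ∈ closure (S ∩ Iio γ) := by
  have h (x : Omega1) : ∃ y ∈ S, x < y := ((eventually_gt x).and hS).exists.imp fun _ => And.symm
  choose y hyS hy using h
  filter_upwards [eventually_gt (Classical.arbitrary _),
    eventually_forall_lt fun x => eventually_gt (y x)] with γ h₀ hγ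
  exact mem_closure_of_forall_lt h₀ fun z hz => ⟨y z, ⟨hyS z, hγ z hz⟩, hy z, (hγ z hz).le⟩

theorem mem_or_compl_mem_of_isClosed {A : Set Omega1} (hA : IsClosed A) :
    A ∈ clubFilter ∨ Aᶜ ∈ clubFilter := by
  by_cases h : ∀ x, ∃ y ∈ A, x ≤ y
  · exact .inl (IsClubIn.mem_clubFilter ⟨hA, h⟩)
  · push Not at h
    obtain ⟨x, hx⟩ := h
    exact .inr <| (eventually_gt x).mono fun β hβ hβA => (hx β hβA).not_gt hβ

variable {Y : Type*} [TopologicalSpace Y] {C : Set Omega1} {u : Omega1 → Y}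

theorem eventually_mem_or_notMem_of_isClosed (hC : C ∈ clubFilter) (hu : ContinuousOn u C)
    {K : Set Y} (hK : IsClosed K) :
    (∀ᶠ β in clubFilter, u β ∈ K) ∨ ∀ᶠ β in clubFilter, u β ∉ K := by
  obtain ⟨C', hC', hsub⟩ := hC
  refine (mem_or_compl_mem_of_isClosed ((hu.mono hsub).preimage_isClosed_of_isClosed hC'.1 hK)).imp
    (mem_of_superset · inter_subset_right) fun h => ?_
  filter_upwards [h, hC'.mem_clubFilter] with β hβ hβC hβK
  exact hβ ⟨hβC, hβK⟩

theorem exists_tendsto [CompactSpace Y] [RegularSpace Y] (hC : C ∈ clubFilter)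
    (hu : ContinuousOn u C) : ∃ c, Tendsto u clubFilter (𝓝 c) := by
  obtain ⟨c, hc⟩ := exists_clusterPt_of_compactSpace (map u clubFilter)
  refine ⟨c, (closed_nhds_basis c).tendsto_right_iff.2 fun V hV => ?_⟩
  exact (eventually_mem_or_notMem_of_isClosed hC hu hV.2).resolve_right
    (mapClusterPt_iff_frequently.1 hc V hV.1)

end clubFilter

/-! ### Increasing tuples -/

/-- `[C]^k`, the set of strictly increasing `k`-tuples of elements of `C`. -/
def increasingTuples (k : ℕ) (C : Set Omega1) : Set (Fin k → Omega1) :=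
  {v | StrictMono v ∧ ∀ i, v i ∈ C}

theorem increasingTuples_mono {k : ℕ} : Monotone (increasingTuples k) :=
  fun _ _ hCD _ hv => ⟨hv.1, fun i => hCD (hv.2 i)⟩

theorem isOpen_setOf_strictMono {ι α : Type*} [Finite ι] [Preorder ι] [LinearOrder α]
    [TopologicalSpace α] [OrderClosedTopology α] : IsOpen {v : ι → α | StrictMono v} := by
  simp only [StrictMono, ofPred_forall]
  exact isOpen_iInter_of_finite fun i => isOpen_iInter_of_finite fun j =>
    isOpen_iInter_of_finite fun _ => isOpen_lt (continuous_apply i) (continuous_apply j)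

section Snoc

variable {k : ℕ} {C : Set Omega1} {a : Fin k → Omega1} {β : Omega1}

theorem snoc_mem_increasingTuples_iff :
    (Fin.snoc a β : Fin (k + 1) → Omega1) ∈ increasingTuples (k + 1) C ↔
      a ∈ increasingTuples k C ∧ β ∈ C ∧ ∀ i, a i < β := by
  have hlast (i : Fin k) : ¬ Fin.last k < i.castSucc := (Fin.castSucc_lt_last i).not_gt
  simp only [increasingTuples, mem_ofPred_eq, StrictMono, Fin.forall_fin_succ', Fin.snoc_castSucc,
    Fin.snoc_last, Fin.castSucc_lt_castSucc_iff, Fin.castSucc_lt_last, hlast, lt_irrefl,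
    forall_const, IsEmpty.forall_iff, and_true, forall_and]
  tauto

theorem init_mem_increasingTuples {v : Fin (k + 1) → Omega1}
    (hv : v ∈ increasingTuples (k + 1) C) :
    Fin.init v ∈ increasingTuples k C ∧ v (Fin.last k) ∈ C ∧
      ∀ i, (Fin.init v : Fin k → Omega1) i < v (Fin.last k) := by
  rwa [← Fin.snoc_init_self v, snoc_mem_increasingTuples_iff] at hv

theorem eventually_snoc_mem_increasingTuples (hC : C ∈ clubFilter)
    (ha : a ∈ increasingTuples k C) :
    ∀ᶠ β in clubFilter, (Fin.snoc a β : Fin (k + 1) → Omega1) ∈ increasingTuples (k + 1) C := by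
  filter_upwards [hC, eventually_all.2 fun i => clubFilter.eventually_gt (a i)] with β hβ hlt
  exact snoc_mem_increasingTuples_iff.2 ⟨ha, hβ, hlt⟩

end Snoc

/-- The filter on `k`-tuples generated by the sets `[C]^k`, for `C` a club. -/
def clubTuples (k : ℕ) : Filter (Fin k → Omega1) :=
  clubFilter.lift' (increasingTuples k)

theorem hasBasis_clubTuples (k : ℕ) :
    (clubTuples k).HasBasis IsClubIn (increasingTuples k) :=
  hasBasis_clubFilter.lift' increasingTuples_mono

theorem increasingTuples_mem_clubTuples {k : ℕ} {C : Set Omega1} (hC : C ∈ clubFilter) :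
    increasingTuples k C ∈ clubTuples k :=
  mem_lift' hC

theorem clubTuples_collapse {k : ℕ} {P : (Fin (k + 1) → Omega1) → Prop}
    (h : ∀ᶠ a in clubTuples k, ∀ᶠ β in clubFilter, P (Fin.snoc a β)) :
    ∀ᶠ v in clubTuples (k + 1), P v := by
  obtain ⟨C, hC, hP⟩ := (hasBasis_clubTuples k).eventually_iff.1 h
  have hdiag : ∀ᶠ β in clubFilter, ∀ a, (∀ i, a i < β) → a ∈ increasingTuples k C →
      P (Fin.snoc a β) :=
    clubFilter.eventually_forall_tuple_lt fun a => by
      by_cases ha : a ∈ increasingTuples k C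
      · exact (hP ha).mono fun _ h _ => h
      · exact .of_forall fun _ h => absurd h ha
  filter_upwards [increasingTuples_mem_clubTuples hC.mem_clubFilter,
    increasingTuples_mem_clubTuples hdiag] with v hvC hv
  obtain ⟨hinit, -, hlt⟩ := init_mem_increasingTuples hvC
  rw [← Fin.snoc_init_self v]
  exact hv.2 (Fin.last k) _ hlt hinit

instance (k : ℕ) : NeBot (clubTuples k) := by
  refine (hasBasis_clubTuples k).neBot_iff.2 fun {C} hC => ?_
  induction k with
  | zero => exact ⟨Fin.elim0, Subsingleton.strictMono _, fun i => i.elim0⟩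
  | succ k ih =>
    obtain ⟨a, ha⟩ := ih
    exact (eventually_snoc_mem_increasingTuples hC.mem_clubFilter ha).exists.imp' _ fun _ => id

/-! ### Limits in the last coordinate -/

theorem continuousOn_of_mem_closure_fiber {Z X : Type*} [TopologicalSpace Z] [TopologicalSpace X]
    [Finite X] [DiscreteTopology X] {s : Set Z} {T : Z → X}
    (h : ∀ a ∈ s, ∀ x, a ∈ closure (s ∩ T ⁻¹' {x}) → T a = x) : ContinuousOn T s := by
  intro a ha
  have hne (x : X) : ∀ᶠ b in 𝓝[s] a, T b = x → T a = x := by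
    by_contra hcon
    obtain ⟨hfreq, hax⟩ : (∃ᶠ b in 𝓝[s] a, T b = x) ∧ T a ≠ x := by
      simpa [not_eventually, Classical.not_imp] using hcon
    refine hax (h a ha x (mem_closure_iff_frequently.2 ?_))
    exact (frequently_nhdsWithin_iff.1 hfreq).mono fun b => And.symm
  rw [ContinuousWithinAt, nhds_discrete, tendsto_pure]
  exact (eventually_all.2 hne).mono fun b hb => (hb (T b) rfl).symm

section LastCoordinate

variable {Y : Type*} [TopologicalSpace Y] {k : ℕ} {C : Set Omega1}
  {f : (Fin (k + 1) → Omega1) → Y} {a : Fin k → Omega1}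

theorem continuousOn_snoc_last (hf : ContinuousOn f (increasingTuples (k + 1) C)) :
    ContinuousOn (fun β => f (Fin.snoc a β))
      {β | (Fin.snoc a β : Fin (k + 1) → Omega1) ∈ increasingTuples (k + 1) C} := by
  have hsnoc : Continuous fun β => (Fin.snoc a β : Fin (k + 1) → Omega1) :=
    continuous_const.finSnoc continuous_id
  exact hf.comp hsnoc.continuousOn fun _ => id

theorem continuousOn_snoc_init {β : Omega1} (hf : ContinuousOn f (increasingTuples (k + 1) C)) :
    ContinuousOn (fun a : Fin k → Omega1 => f (Fin.snoc a β))
      {a | (Fin.snoc a β : Fin (k + 1) → Omega1) ∈ increasingTuples (k + 1) C} := by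
  have hsnoc : Continuous fun a : Fin k → Omega1 => (Fin.snoc a β : Fin (k + 1) → Omega1) :=
    Continuous.finSnoc (A := fun _ => Omega1) continuous_id continuous_const
  exact hf.comp hsnoc.continuousOn fun _ => id

theorem eventually_snoc_mem_of_mem_closure (hC : C ∈ clubFilter)
    (hf : ContinuousOn f (increasingTuples (k + 1) C)) (ha : a ∈ increasingTuples k C)
    {D : Set (Fin k → Omega1)} (hD : D ⊆ increasingTuples k C) (haD : a ∈ closure D)
    {K : Omega1 → Set Y} (hK : ∀ β, IsClosed (K β))
    (h : ∀ b ∈ D, ∀ᶠ β in clubFilter, f (Fin.snoc b β) ∈ K β) :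
    ∀ᶠ β in clubFilter, f (Fin.snoc a β) ∈ K β := by
  have hopen : IsOpen (Iic a) := by
    rw [← pi_univ_Iic]
    exact isOpen_set_pi finite_univ fun i _ => isOpen_Iic_of_wellFoundedLT (a i)
  -- Since `Iic a` is countable, a single club of `β` serves all `b ∈ D` in this neighbourhood.
  have haD' : a ∈ closure (Iic a ∩ D) := hopen.inter_closure ⟨self_mem_Iic, haD⟩
  have hev : ∀ᶠ β in clubFilter, ∀ b ∈ Iic a ∩ D, f (Fin.snoc b β) ∈ K β ∧
      (Fin.snoc b β : Fin (k + 1) → Omega1) ∈ increasingTuples (k + 1) C :=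
    (eventually_countable_ball ((Omega1.countable_Iic_pi a).mono inter_subset_left)).2
      fun b hb => (h b hb.2).and (eventually_snoc_mem_increasingTuples hC (hD hb.2))
  filter_upwards [hev, eventually_snoc_mem_increasingTuples hC ha] with β hβ haβ
  have hcont : ContinuousWithinAt (fun b => f (Fin.snoc b β)) (Iic a ∩ D) a :=
    (continuousOn_snoc_init hf a haβ).mono fun b hb => (hβ b hb).2
  exact (hK β).closure_subset (hcont.mem_closure haD' fun b hb => (hβ b hb).1)

variable [RegularSpace Y]

theorem continuousOn_of_tendsto_snoc (hC : C ∈ clubFilter)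
    (hf : ContinuousOn f (increasingTuples (k + 1) C)) {s : (Fin k → Omega1) → Y}
    (hs : ∀ a ∈ increasingTuples k C,
      Tendsto (fun β => f (Fin.snoc a β)) clubFilter (𝓝 (s a))) :
    ContinuousOn s (increasingTuples k C) := by
  intro a ha
  refine (closed_nhds_basis (s a)).tendsto_right_iff.2 fun V ⟨hV, hVc⟩ => ?_
  by_contra hcon
  have haD : a ∈ closure {b | b ∈ increasingTuples k C ∧ s b ∉ V} :=
    mem_closure_iff_frequently.2 <|
      (frequently_nhdsWithin_iff.1 (not_eventually.1 hcon)).mono fun b => And.symm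
  have hout : ∀ᶠ β in clubFilter, f (Fin.snoc a β) ∈ (interior V)ᶜ :=
    eventually_snoc_mem_of_mem_closure hC hf ha (fun b hb => hb.1) haD
      (fun _ => isOpen_interior.isClosed_compl) fun b hb =>
        ((hs b hb.1).eventually (hVc.compl_mem_nhds hb.2)).mono
          fun β hβ hβV => hβ (interior_subset hβV)
  have hin := (hs a ha).eventually (interior_mem_nhds.2 hV)
  obtain ⟨β, hβ, hβ'⟩ := (hin.and hout).exists
  exact hβ' hβ

theorem exists_continuousOn_tendsto_snoc [CompactSpace Y] (hC : C ∈ clubFilter)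
    (hf : ContinuousOn f (increasingTuples (k + 1) C)) :
    ∃ s : (Fin k → Omega1) → Y, ContinuousOn s (increasingTuples k C) ∧
      ∀ a ∈ increasingTuples k C,
        Tendsto (fun β => f (Fin.snoc a β)) clubFilter (𝓝 (s a)) := by
  have : Nonempty Y := ⟨f (Classical.arbitrary _)⟩
  have hlim : ∀ a ∈ increasingTuples k C,
      ∃ c, Tendsto (fun β => f (Fin.snoc a β)) clubFilter (𝓝 c) := fun a ha =>
    clubFilter.exists_tendsto (eventually_snoc_mem_increasingTuples hC ha)
      (continuousOn_snoc_last hf)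
  choose! s hs using hlim
  exact ⟨s, continuousOn_of_tendsto_snoc hC hf hs, hs⟩

end LastCoordinate

theorem exists_eventually_eq_of_finite {X : Type*} [TopologicalSpace X] [DiscreteTopology X]
    [Finite X] {k : ℕ} {C : Set Omega1} (hC : C ∈ clubFilter) {T : (Fin k → Omega1) → X}
    (hT : ContinuousOn T (increasingTuples k C)) : ∃ x, ∀ᶠ v in clubTuples k, T v = x := by
  induction k with
  | zero => exact ⟨T Fin.elim0, .of_forall fun v => congrArg T (Subsingleton.elim _ _)⟩
  | succ k ih =>
    obtain ⟨s, hs, hlim⟩ := exists_continuousOn_tendsto_snoc hC hT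
    obtain ⟨x, hx⟩ := ih hs
    refine ⟨x, clubTuples_collapse ?_⟩
    filter_upwards [hx, increasingTuples_mem_clubTuples hC] with a hax ha
    simpa only [nhds_discrete, hax, tendsto_pure] using hlim a ha

/-! ### Maps from `ω₁` to a linear order -/

/-- `g` is strictly increasing, strictly decreasing, or constant on `s`. -/
def StrictlyMonotoneOrConstOn {α L : Type*} [Preorder α] [Preorder L] (g : α → L) (s : Set α) :
    Prop :=
  StrictMonoOn g s ∨ StrictAntiOn g s ∨ ∀ a ∈ s, ∀ b ∈ s, g a = g b

theorem StrictlyMonotoneOrConstOn.mono {α L : Type*} [Preorder α] [Preorder L] {g : α → L}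
    {s t : Set α} (h : StrictlyMonotoneOrConstOn g t) (hst : s ⊆ t) :
    StrictlyMonotoneOrConstOn g s :=
  h.imp (·.mono hst) (Or.imp (·.mono hst) fun h a ha b hb => h a (hst ha) b (hst hb))

section OneVariable

variable {L : Type*} [LinearOrder L] [TopologicalSpace L] [OrderTopology L]
  {C : Set Omega1} {u w : Omega1 → L} {c : L}

theorem exists_eventually_cmp_eq (hC : C ∈ clubFilter) (hu : ContinuousOn u C) (c : L) :
    ∃ o, ∀ᶠ β in clubFilter, cmp (u β) c = o := by
  rcases clubFilter.eventually_mem_or_notMem_of_isClosed hC hu (isClosed_Ici (a := c))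
    with hge | hlt
  · rcases clubFilter.eventually_mem_or_notMem_of_isClosed hC hu (isClosed_Iic (a := c))
      with hle | hgt
    · refine ⟨.eq, ?_⟩
      filter_upwards [hge, hle] with β h₁ h₂
      exact (cmp_eq_eq_iff _ _).2 (le_antisymm h₂ h₁)
    · exact ⟨.gt, hgt.mono fun β h => (cmp_eq_gt_iff _ _).2 (not_le.1 h)⟩
  · exact ⟨.lt, hlt.mono fun β h => (cmp_eq_lt_iff _ _).2 (not_le.1 h)⟩

theorem eventually_forall_lt_of_tendsto (hw : Tendsto w clubFilter (𝓝 c)) (u : Omega1 → L) :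
    ∀ᶠ γ in clubFilter, ∀ x < γ, u x < c → u x < w γ :=
  clubFilter.eventually_forall_lt fun _ =>
    eventually_imp_distrib_left.2 fun hx => hw.eventually (lt_mem_nhds hx)

theorem eventually_le_of_tendsto_of_lt (hC : C ∈ clubFilter) (hu : ContinuousOn u C)
    (huc : ∀ᶠ β in clubFilter, u β < c) (hw : Tendsto w clubFilter (𝓝 c)) :
    ∀ᶠ β in clubFilter, u β ≤ w β := by
  -- At a limit point `γ` of `C ∩ {u < c}`, all earlier values of `u` below `c` are below `w γ`.
  filter_upwards [hC, eventually_forall_lt_of_tendsto hw u,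
    clubFilter.eventually_mem_closure_inter_Iio (inter_mem hC huc)] with γ hγC hγ hcl
  have hcont : ContinuousWithinAt u (C ∩ {β | u β < c} ∩ Iio γ) γ :=
    (hu γ hγC).mono (inter_subset_left.trans inter_subset_left)
  exact isClosed_Iic.closure_subset <|
    hcont.mem_closure hcl fun x hx => (hγ x hx.2 hx.1.2).le

theorem eventuallyEq_of_cmp_eq (hC : C ∈ clubFilter) (hu : ContinuousOn u C)
    (hw : ContinuousOn w C) (huc : Tendsto u clubFilter (𝓝 c)) (hwc : Tendsto w clubFilter (𝓝 c))
    {o : Ordering} (huo : ∀ᶠ β in clubFilter, cmp (u β) c = o)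
    (hwo : ∀ᶠ β in clubFilter, cmp (w β) c = o) : u =ᶠ[clubFilter] w := by
  cases o with
  | lt =>
    simp only [cmp_eq_lt_iff] at huo hwo
    exact EventuallyLE.antisymm (eventually_le_of_tendsto_of_lt hC hu huo hwc)
      (eventually_le_of_tendsto_of_lt hC hw hwo huc)
  | eq =>
    simp only [cmp_eq_eq_iff] at huo hwo
    exact EventuallyEq.trans huo (EventuallyEq.symm hwo)
  | gt =>
    simp only [cmp_eq_gt_iff] at huo hwo
    exact EventuallyLE.antisymm (eventually_le_of_tendsto_of_lt (L := Lᵒᵈ) hC hw hwo huc)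
      (eventually_le_of_tendsto_of_lt (L := Lᵒᵈ) hC hu huo hwc)

theorem exists_strictMonoOn_of_tendsto_of_lt (hu : Tendsto u clubFilter (𝓝 c))
    (huc : ∀ᶠ β in clubFilter, u β < c) : ∃ S ∈ clubFilter, StrictMonoOn u S :=
  ⟨_, (eventually_forall_lt_of_tendsto hu u).and huc, fun x hx _ hy hxy => hy.1 x hxy hx.2⟩

theorem exists_strictlyMonotoneOrConstOn (hC : C ∈ clubFilter) (hu : ContinuousOn u C)
    (huc : Tendsto u clubFilter (𝓝 c)) : ∃ S ∈ clubFilter, StrictlyMonotoneOrConstOn u S := by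
  obtain ⟨o, ho⟩ := exists_eventually_cmp_eq hC hu c
  cases o with
  | lt =>
    obtain ⟨S, hS, hmono⟩ :=
      exists_strictMonoOn_of_tendsto_of_lt huc (ho.mono fun _ => (cmp_eq_lt_iff _ _).1)
    exact ⟨S, hS, .inl hmono⟩
  | eq =>
    exact ⟨_, ho, .inr <| .inr fun a ha b hb =>
      ((cmp_eq_eq_iff _ _).1 ha).trans ((cmp_eq_eq_iff _ _).1 hb).symm⟩
  | gt =>
    obtain ⟨S, hS, hmono⟩ :=
      exists_strictMonoOn_of_tendsto_of_lt (L := Lᵒᵈ) huc (ho.mono fun _ => (cmp_eq_gt_iff _ _).1)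
    exact ⟨S, hS, .inr <| .inl fun x hx y hy hxy => hmono hx hy hxy⟩

end OneVariable

/-! ### Factorization through a coordinate -/

/-- On `[C]^k` for some club `C`, the map `f` depends on a single coordinate, through a continuous
map that is strictly monotone or constant. The outer map `g` is total, only its values on `C`
matter. -/
def FactorsThroughCoord {k : ℕ} {L : Type*} [LinearOrder L] [TopologicalSpace L]
    (f : (Fin k → Omega1) → L) : Prop :=
  ∃ C, IsClubIn C ∧ ∃ (j : Fin k) (g : Omega1 → L), ContinuousOn g C ∧
    StrictlyMonotoneOrConstOn g C ∧ ∀ v ∈ increasingTuples k C, f v = g (v j)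

theorem mem_closure_setOf_coord_lt {k : ℕ} {C : Set Omega1} {a : Fin k → Omega1}
    (ha : a ∈ increasingTuples k C) {j : Fin k} (hj : a j ∈ closure (C ∩ Iio (a j))) :
    a ∈ closure {b | b ∈ increasingTuples k C ∧ b j < a j} := by
  have hφ : Continuous (Function.update a j) := continuous_const.update j continuous_id
  have hφa : Function.update a j (a j) = a := Function.update_eq_self j a
  have hopen : IsOpen {x | StrictMono (Function.update a j x)} :=
    isOpen_setOf_strictMono.preimage hφ
  have hmem : a j ∈ closure ({x | StrictMono (Function.update a j x)} ∩ (C ∩ Iio (a j))) :=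
    hopen.inter_closure ⟨by simpa only [mem_ofPred_eq, hφa] using ha.1, hj⟩
  rw [← hφa]
  refine map_mem_closure hφ hmem fun x ⟨hx, hxC, hxlt⟩ => ⟨⟨hx, fun i => ?_⟩, by simpa using hxlt⟩
  rcases eq_or_ne i j with rfl | hij
  · simpa using hxC
  · simpa [hij] using ha.2 i

section Factorization

variable {L : Type*} [LinearOrder L] [TopologicalSpace L] {k : ℕ} {C : Set Omega1}

theorem FactorsThroughCoord.of_eventually {f : (Fin k → Omega1) → L} {g : Omega1 → L}
    (hC : C ∈ clubFilter) (hg : ContinuousOn g C) (hgm : StrictlyMonotoneOrConstOn g C) {j : Fin k}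
    (h : ∀ᶠ v in clubTuples k, f v = g (v j)) : FactorsThroughCoord f := by
  obtain ⟨D, hD, hfg⟩ := (hasBasis_clubTuples k).eventually_iff.1 h
  obtain ⟨E, hE, hEsub⟩ := inter_mem hC hD.mem_clubFilter
  exact ⟨E, hE, j, g, hg.mono fun x hx => (hEsub hx).1, hgm.mono fun x hx => (hEsub hx).1,
    fun v hv => hfg (increasingTuples_mono (fun x hx => (hEsub hx).2) hv)⟩

variable [OrderTopology L] {f : (Fin (k + 1) → Omega1) → L} {c : L}

theorem eventuallyEq_snoc_of_cmp_eq (hC : C ∈ clubFilter)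
    (hf : ContinuousOn f (increasingTuples (k + 1) C)) {a b : Fin k → Omega1}
    (ha : a ∈ increasingTuples k C) (hb : b ∈ increasingTuples k C)
    (hac : Tendsto (fun β => f (Fin.snoc a β)) clubFilter (𝓝 c))
    (hbc : Tendsto (fun β => f (Fin.snoc b β)) clubFilter (𝓝 c)) {o : Ordering}
    (hao : ∀ᶠ β in clubFilter, cmp (f (Fin.snoc a β)) c = o)
    (hbo : ∀ᶠ β in clubFilter, cmp (f (Fin.snoc b β)) c = o) :
    ∀ᶠ β in clubFilter, f (Fin.snoc a β) = f (Fin.snoc b β) :=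
  eventuallyEq_of_cmp_eq
    (inter_mem (eventually_snoc_mem_increasingTuples hC ha)
      (eventually_snoc_mem_increasingTuples hC hb))
    ((continuousOn_snoc_last hf).mono inter_subset_left)
    ((continuousOn_snoc_last hf).mono inter_subset_right) hac hbc hao hbo

theorem exists_eventually_cmp_snoc_eq (hC : C ∈ clubFilter)
    (hf : ContinuousOn f (increasingTuples (k + 1) C))
    (hlim : ∀ a ∈ increasingTuples k C,
      Tendsto (fun β => f (Fin.snoc a β)) clubFilter (𝓝 c)) :
    ∃ o, ∀ᶠ a in clubTuples k, ∀ᶠ β in clubFilter, cmp (f (Fin.snoc a β)) c = o := by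
  have hcmp : ∀ a ∈ increasingTuples k C,
      ∃ o, ∀ᶠ β in clubFilter, cmp (f (Fin.snoc a β)) c = o := fun a ha =>
    exists_eventually_cmp_eq (eventually_snoc_mem_increasingTuples hC ha)
      (continuousOn_snoc_last hf) c
  choose! T hT using hcmp
  let : TopologicalSpace Ordering := ⊥
  have : DiscreteTopology Ordering := ⟨rfl⟩
  -- Sections of the same type agree on a club, which makes the fibres of `T` relatively closed.
  have hTcont : ContinuousOn T (increasingTuples k C) := by
    refine continuousOn_of_mem_closure_fiber fun a ha o hao => ?_
    obtain ⟨b, hb, rfl⟩ := closure_nonempty_iff.1 ⟨a, hao⟩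
    have hab : ∀ᶠ β in clubFilter, f (Fin.snoc a β) = f (Fin.snoc b β) :=
      eventually_snoc_mem_of_mem_closure hC hf ha inter_subset_left hao
        (fun _ => isClosed_singleton) fun b' ⟨hb', hbb'⟩ =>
          eventuallyEq_snoc_of_cmp_eq hC hf hb' hb (hlim b' hb') (hlim b hb)
            (hbb' ▸ hT b' hb') (hT b hb)
    obtain ⟨β, hβ, haβ, hbβ⟩ := (hab.and ((hT a ha).and (hT b hb))).exists
    rw [← haβ, ← hbβ, hβ]
  obtain ⟨o, ho⟩ := exists_eventually_eq_of_finite hC hTcont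
  refine ⟨o, ?_⟩
  filter_upwards [ho, increasingTuples_mem_clubTuples hC] with a hao ha
  exact hao ▸ hT a ha

theorem FactorsThroughCoord.of_tendsto_snoc_const (hC : C ∈ clubFilter)
    (hf : ContinuousOn f (increasingTuples (k + 1) C))
    (hlim : ∀ a ∈ increasingTuples k C,
      Tendsto (fun β => f (Fin.snoc a β)) clubFilter (𝓝 c)) : FactorsThroughCoord f := by
  obtain ⟨o, ho⟩ := exists_eventually_cmp_snoc_eq hC hf hlim
  have hCk := increasingTuples_mem_clubTuples (k := k) hC
  obtain ⟨b, hbo, hb⟩ := (ho.and hCk).exists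
  have hbC := eventually_snoc_mem_increasingTuples hC hb
  obtain ⟨S, hS, hmono⟩ :=
    exists_strictlyMonotoneOrConstOn hbC (continuousOn_snoc_last hf) (hlim b hb)
  refine .of_eventually (inter_mem hbC hS) ((continuousOn_snoc_last hf).mono inter_subset_left)
    (hmono.mono inter_subset_right) (j := Fin.last k) (clubTuples_collapse ?_)
  filter_upwards [ho, hCk] with a hao ha
  simpa only [Fin.snoc_last] using
    eventuallyEq_snoc_of_cmp_eq hC hf ha hb (hlim a ha) (hlim b hb) hao hbo

theorem eventually_eq_coord_of_strictMonoOn (hC : C ∈ clubFilter)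
    (hf : ContinuousOn f (increasingTuples (k + 1) C)) {g : Omega1 → L} (hg : ContinuousOn g C)
    (hgm : StrictMonoOn g C) {j : Fin k}
    (hlim : ∀ a ∈ increasingTuples k C,
      Tendsto (fun β => f (Fin.snoc a β)) clubFilter (𝓝 (g (a j)))) :
    ∀ᶠ v in clubTuples (k + 1), f v = g (v j.castSucc) := by
  refine clubTuples_collapse ?_
  simp only [Fin.snoc_castSucc]
  filter_upwards [increasingTuples_mem_clubTuples
    (inter_mem hC (clubFilter.eventually_mem_closure_inter_Iio hC))] with a haC'
  have ha : a ∈ increasingTuples k C := increasingTuples_mono inter_subset_left haC'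
  have haj : a j ∈ closure (C ∩ Iio (a j)) := (haC'.2 j).2
  have hle : ∀ᶠ β in clubFilter, f (Fin.snoc a β) ≤ g (a j) :=
    eventually_snoc_mem_of_mem_closure hC hf ha (fun b hb => hb.1)
      (mem_closure_setOf_coord_lt ha haj) (fun _ => isClosed_Iic) fun b ⟨hb, hlt⟩ =>
        ((hlim b hb).eventually (gt_mem_nhds (hgm (hb.2 j) (ha.2 j) hlt))).mono fun _ => le_of_lt
  have hcount : (C ∩ Iio (a j)).Countable :=
    (Omega1.countable_Iic (a j)).mono (inter_subset_right.trans Iio_subset_Iic_self)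
  have hgt : ∀ᶠ β in clubFilter, ∀ x ∈ C ∩ Iio (a j), g x < f (Fin.snoc a β) :=
    (eventually_countable_ball hcount).2 fun x hx =>
      (hlim a ha).eventually (lt_mem_nhds (hgm hx.1 (ha.2 j) hx.2))
  filter_upwards [hle, hgt] with β hβle hβgt
  refine hβle.antisymm (isClosed_Iic.closure_subset ?_)
  exact ((hg _ (ha.2 j)).mono inter_subset_left).mem_closure haj fun x hx => (hβgt x hx).le

theorem FactorsThroughCoord.of_tendsto_snoc (hC : C ∈ clubFilter)
    (hf : ContinuousOn f (increasingTuples (k + 1) C)) {g : Omega1 → L} (hg : ContinuousOn g C)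
    (hgm : StrictlyMonotoneOrConstOn g C) {j : Fin k}
    (hlim : ∀ a ∈ increasingTuples k C,
      Tendsto (fun β => f (Fin.snoc a β)) clubFilter (𝓝 (g (a j)))) : FactorsThroughCoord f := by
  rcases hgm with hmono | hanti | hconst
  · exact .of_eventually hC hg (.inl hmono) <|
      eventually_eq_coord_of_strictMonoOn hC hf hg hmono hlim
  · exact .of_eventually hC hg (.inr (.inl hanti)) <|
      eventually_eq_coord_of_strictMonoOn (L := Lᵒᵈ) hC hf hg hanti.dual_right hlim
  · obtain ⟨x, hx⟩ := clubFilter.nonempty_of_mem hC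
    exact .of_tendsto_snoc_const hC hf fun a ha => hconst _ (ha.2 j) x hx ▸ hlim a ha

theorem FactorsThroughCoord.of_continuousOn [CompactSpace L] (hC : C ∈ clubFilter)
    (hf : ContinuousOn f (increasingTuples (k + 1) C)) : FactorsThroughCoord f := by
  induction k generalizing C with
  | zero =>
    obtain ⟨s, -, hlim⟩ := exists_continuousOn_tendsto_snoc hC hf
    exact .of_tendsto_snoc_const hC hf fun a ha => Subsingleton.elim a Fin.elim0 ▸ hlim a ha
  | succ k ih =>
    obtain ⟨s, hs, hlim⟩ := exists_continuousOn_tendsto_snoc hC hf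
    obtain ⟨D, hD, j, g, hg, hgm, hsg⟩ := ih hC hs
    have hCD := inter_mem hC hD.mem_clubFilter
    refine .of_tendsto_snoc hCD (hf.mono (increasingTuples_mono inter_subset_left))
      (hg.mono inter_subset_right) (hgm.mono inter_subset_right) (j := j) fun a ha => ?_
    rw [← hsg a (increasingTuples_mono inter_subset_right ha)]
    exact hlim a (increasingTuples_mono inter_subset_left ha)

end Factorization

theorem exists_continuousOn_extension {X Y : Type*} [TopologicalSpace X] [TopologicalSpace Y]
    [Nonempty Y] {p : X → Prop} {f : Subtype p → Y} (hf : Continuous f) :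
    ∃ F : X → Y, ContinuousOn F {x | p x} ∧ ∀ x : Subtype p, F x = f x := by
  have hF := Subtype.val_injective.extend_apply f fun _ => Classical.arbitrary Y
  refine ⟨Function.extend Subtype.val f fun _ => Classical.arbitrary Y, ?_, hF⟩
  exact continuousOn_iff_continuous_domRestrict.2 (hf.congr fun x => (hF x).symm)

/-- If `L` is a compact LOTS, `1 ≤ m`, and `f : [ω₁]^m → L` is continuous, then there are
a club `C ⊆ ω₁`, a continuous `g : C → L` and an index `j` such that
`f (α₁, …, α_m) = g (α_j)` on `[C]^m`, and `g` is strictly increasing, strictly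
decreasing, or constant. -/
theorem stmt16 (m : ℕ) (hm : 1 ≤ m) {L : Type*}
    [LinearOrder L] [TopologicalSpace L] [OrderTopology L] [CompactSpace L]
    (f : {v : Fin m → Omega1 // StrictMono v} → L) (hf : Continuous f) :
    ∃ (C : Set Omega1) (j : Fin m) (g : C → L), IsClubIn C ∧ Continuous g ∧
      (∀ (v : {v : Fin m → Omega1 // StrictMono v}) (hv : ∀ i, v.1 i ∈ C),
        f v = g ⟨v.1 j, hv j⟩) ∧
      (StrictMono g ∨ StrictAnti g ∨ ∀ a b : C, g a = g b) := by
  obtain ⟨k, rfl⟩ := Nat.exists_eq_add_of_le' hm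
  obtain ⟨v₀, hv₀⟩ :=
    (clubTuples (k + 1)).nonempty_of_mem (increasingTuples_mem_clubTuples univ_mem)
  have : Nonempty L := ⟨f ⟨v₀, hv₀.1⟩⟩
  obtain ⟨F, hF, hFf⟩ := exists_continuousOn_extension hf
  have hFC : ContinuousOn F (increasingTuples (k + 1) univ) := hF.mono fun v hv => hv.1
  obtain ⟨C, hC, j, g, hg, hgm, hfg⟩ := FactorsThroughCoord.of_continuousOn univ_mem hFC
  refine ⟨C, j, C.domRestrict g, hC, hg.domRestrict, fun v hv => ?_, ?_⟩
  · rw [← hFf v]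
    exact hfg v ⟨v.2, hv⟩
  · exact hgm.imp (fun h => h.domRestrict) (Or.imp (fun h a b hab => h a.2 b.2 hab)
      fun h a b => h a a.2 b b.2)

end
end
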